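/- arXiv:2102.06347 — 9 statements merged into one kernel-verified Lean document; each statement's English description precedes it below -/
import Mathlib

section
/- Let c > 0, ξ > 0 and ε > 0 satisfy ξε > 2c. Then for all real numbers Q₁₁, Q₁₂, M₁, M₂, the ferronematic bulk energy density satisfies the lower bound (Q₁₁²+Q₁₂²−1)² + (ξ/4)(M₁²+M₂²−1)² − cQ₁₁(M₁²−M₂²) − 2cQ₁₂M₁M₂ ≥ (Q₁₁²+Q₁₂² − (1 + cε/2))² + ((ξε−2c)/(4ε))·(M₁²+M₂² − ξε/(ξε−2c))² − (cε + c²ε²/4 + cξ/(2(ξε−2c))). In particular, the bulk density is bounded below by a constant depending only on c, ξ, ε. -/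
/-- The ferronematic bulk energy density with coupling parameter `c` and
magnetic weight `ξ`. -/
noncomputable def ferroBulk (c ξ Q11 Q12 M1 M2 : ℝ) : ℝ :=
  (Q11 ^ 2 + Q12 ^ 2 - 1) ^ 2 + ξ / 4 * (M1 ^ 2 + M2 ^ 2 - 1) ^ 2
    - c * Q11 * (M1 ^ 2 - M2 ^ 2) - 2 * c * Q12 * M1 * M2

/-! Regard `Q` and `M` as complex numbers. The coupling term is `c` times the inner product of `Q`
with `M ^ 2`, so Young's inequality and `‖M ^ 2‖ = ‖M‖ ^ 2` bound it by a combination of `‖Q‖ ^ 2`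
and `‖M‖ ^ 4`. This decouples the density into one quadratic polynomial in `‖Q‖ ^ 2` and one in
`‖M‖ ^ 2`, in each of which the square can be completed. -/

lemma two_mul_coupling_le {K : Type*} [Field K] [LinearOrder K] [IsStrictOrderedRing K] {ε : K}
    (hε : 0 < ε) (Q11 Q12 M1 M2 : K) :
    2 * (Q11 * (M1 ^ 2 - M2 ^ 2) + 2 * Q12 * M1 * M2) ≤
      ε * (Q11 ^ 2 + Q12 ^ 2) + ε⁻¹ * (M1 ^ 2 + M2 ^ 2) ^ 2 := by
  have young_re : 2 * Q11 * (M1 ^ 2 - M2 ^ 2) ≤ ε * Q11 ^ 2 + ε⁻¹ * (M1 ^ 2 - M2 ^ 2) ^ 2 :=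
    two_mul_le_add_mul_sq hε
  have young_im : 2 * Q12 * (2 * M1 * M2) ≤ ε * Q12 ^ 2 + ε⁻¹ * (2 * M1 * M2) ^ 2 :=
    two_mul_le_add_mul_sq hε
  have norm_sq : (M1 ^ 2 + M2 ^ 2) ^ 2 = (M1 ^ 2 - M2 ^ 2) ^ 2 + (2 * M1 * M2) ^ 2 := by ring
  rw [norm_sq]
  linarith

lemma sub_one_sq_sub_mul_eq {K : Type*} [Field K] [NeZero (2 : K)] (t x : K) :
    (x - 1) ^ 2 - t * x = (x - (1 + t / 2)) ^ 2 - (t + t ^ 2 / 4) := by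
  have four_eq : (4 : K) = 2 * 2 := by norm_num
  rw [four_eq]
  field_simp
  ring

lemma mul_sub_one_sq_sub_mul_sq_eq {K : Type*} [Field K] {a b : K} (hab : a ≠ b) (x : K) :
    a * (x - 1) ^ 2 - b * x ^ 2 = (a - b) * (x - a / (a - b)) ^ 2 - a * b / (a - b) := by
  have hsub : a - b ≠ 0 := sub_ne_zero.mpr hab
  field_simp
  ring

section FerroBulk

variable {c ξ ε : ℝ}

lemma decoupled_le_ferroBulk (hc : 0 ≤ c) (hε : 0 < ε) (ξ Q11 Q12 M1 M2 : ℝ) :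
    ((Q11 ^ 2 + Q12 ^ 2 - 1) ^ 2 - c * ε / 2 * (Q11 ^ 2 + Q12 ^ 2))
        + (ξ / 4 * (M1 ^ 2 + M2 ^ 2 - 1) ^ 2 - c / (2 * ε) * (M1 ^ 2 + M2 ^ 2) ^ 2)
      ≤ ferroBulk c ξ Q11 Q12 M1 M2 := by
  have coupling_le := mul_le_mul_of_nonneg_left (two_mul_coupling_le hε Q11 Q12 M1 M2) hc
  have coeff_eq : c / (2 * ε) = c * ε⁻¹ / 2 := by ring
  rw [ferroBulk, coeff_eq]
  linarith

lemma magnetic_part_eq (hε : ε ≠ 0) (h : 2 * c ≠ ξ * ε) (m : ℝ) :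
    ξ / 4 * (m - 1) ^ 2 - c / (2 * ε) * m ^ 2 =
      (ξ * ε - 2 * c) / (4 * ε) * (m - ξ * ε / (ξ * ε - 2 * c)) ^ 2
        - c * ξ / (2 * (ξ * ε - 2 * c)) := by
  have hd : ξ * ε - 2 * c ≠ 0 := sub_ne_zero.mpr h.symm
  have sub_eq : ξ / 4 - c / (2 * ε) = (ξ * ε - 2 * c) / (4 * ε) := by
    field_simp
    ring
  have coeff_ne : ξ / 4 ≠ c / (2 * ε) := by
    rw [← sub_ne_zero, sub_eq]
    exact div_ne_zero hd (mul_ne_zero four_ne_zero hε)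
  have center_eq : ξ / 4 / ((ξ * ε - 2 * c) / (4 * ε)) = ξ * ε / (ξ * ε - 2 * c) := by
    field_simp
  have const_eq : ξ / 4 * (c / (2 * ε)) / ((ξ * ε - 2 * c) / (4 * ε)) =
      c * ξ / (2 * (ξ * ε - 2 * c)) := by
    field_simp
  rw [mul_sub_one_sq_sub_mul_sq_eq coeff_ne, sub_eq, center_eq, const_eq]

lemma completed_squares_le_ferroBulk (hc : 0 ≤ c) (hε : 0 < ε) (h : 2 * c ≠ ξ * ε)
    (Q11 Q12 M1 M2 : ℝ) :
    (Q11 ^ 2 + Q12 ^ 2 - (1 + c * ε / 2)) ^ 2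
        + (ξ * ε - 2 * c) / (4 * ε) * (M1 ^ 2 + M2 ^ 2 - ξ * ε / (ξ * ε - 2 * c)) ^ 2
        - (c * ε + c ^ 2 * ε ^ 2 / 4 + c * ξ / (2 * (ξ * ε - 2 * c)))
      ≤ ferroBulk c ξ Q11 Q12 M1 M2 := by
  -- The shift `1 + c * ε / 2` comes from twice the nematic Young term; the excess is nonnegative.
  have excess_nonneg : 0 ≤ c * ε / 2 * (Q11 ^ 2 + Q12 ^ 2) := by positivity
  calc
    _ = ((Q11 ^ 2 + Q12 ^ 2 - (1 + c * ε / 2)) ^ 2 - (c * ε + (c * ε) ^ 2 / 4))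
          + ((ξ * ε - 2 * c) / (4 * ε) * (M1 ^ 2 + M2 ^ 2 - ξ * ε / (ξ * ε - 2 * c)) ^ 2
            - c * ξ / (2 * (ξ * ε - 2 * c))) := by ring
    _ = ((Q11 ^ 2 + Q12 ^ 2 - 1) ^ 2 - c * ε * (Q11 ^ 2 + Q12 ^ 2))
          + (ξ / 4 * (M1 ^ 2 + M2 ^ 2 - 1) ^ 2 - c / (2 * ε) * (M1 ^ 2 + M2 ^ 2) ^ 2) := by
      rw [sub_one_sq_sub_mul_eq, magnetic_part_eq hε.ne' h]
    _ ≤ ((Q11 ^ 2 + Q12 ^ 2 - 1) ^ 2 - c * ε / 2 * (Q11 ^ 2 + Q12 ^ 2))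
          + (ξ / 4 * (M1 ^ 2 + M2 ^ 2 - 1) ^ 2 - c / (2 * ε) * (M1 ^ 2 + M2 ^ 2) ^ 2) := by
      linarith
    _ ≤ ferroBulk c ξ Q11 Q12 M1 M2 := decoupled_le_ferroBulk hc hε ξ Q11 Q12 M1 M2

lemma neg_const_le_ferroBulk (hc : 0 ≤ c) (hε : 0 < ε) (h : 2 * c < ξ * ε)
    (Q11 Q12 M1 M2 : ℝ) :
    -(c * ε + c ^ 2 * ε ^ 2 / 4 + c * ξ / (2 * (ξ * ε - 2 * c)))
      ≤ ferroBulk c ξ Q11 Q12 M1 M2 := by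
  have hd : 0 < ξ * ε - 2 * c := sub_pos.mpr h
  refine le_trans ?_ (completed_squares_le_ferroBulk hc hε h.ne Q11 Q12 M1 M2)
  rw [sub_eq_add_neg]
  exact le_add_of_nonneg_left (by positivity)

lemma exists_forall_le_ferroBulk (hc : 0 ≤ c) (hξ : 0 < ξ) :
    ∃ K : ℝ, ∀ Q11 Q12 M1 M2 : ℝ, K ≤ ferroBulk c ξ Q11 Q12 M1 M2 := by
  have weight_pos : 0 < (2 * c + 1) / ξ := by positivity
  have weight_large : 2 * c < ξ * ((2 * c + 1) / ξ) := by
    rw [mul_div_cancel₀ _ hξ.ne']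
    exact lt_add_one _
  exact ⟨_, neg_const_le_ferroBulk hc weight_pos weight_large⟩

theorem ferroBulk_lower_bound_general (hc : 0 ≤ c) (hξ : 0 < ξ) (hε : 0 < ε)
    (h : 2 * c ≠ ξ * ε) :
    (∀ Q11 Q12 M1 M2 : ℝ,
      ferroBulk c ξ Q11 Q12 M1 M2 ≥
        (Q11 ^ 2 + Q12 ^ 2 - (1 + c * ε / 2)) ^ 2
          + (ξ * ε - 2 * c) / (4 * ε) * (M1 ^ 2 + M2 ^ 2 - ξ * ε / (ξ * ε - 2 * c)) ^ 2
          - (c * ε + c ^ 2 * ε ^ 2 / 4 + c * ξ / (2 * (ξ * ε - 2 * c)))) ∧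
    ∃ K : ℝ, ∀ Q11 Q12 M1 M2 : ℝ, ferroBulk c ξ Q11 Q12 M1 M2 ≥ K :=
  ⟨completed_squares_le_ferroBulk hc hε h, exists_forall_le_ferroBulk hc hξ⟩

end FerroBulk

/-- Lower bound for the ferronematic bulk energy density. -/
theorem ferroBulk_lower_bound (c ξ ε : ℝ) (hc : 0 < c) (hξ : 0 < ξ) (hε : 0 < ε)
    (h : 2 * c < ξ * ε) :
    (∀ Q11 Q12 M1 M2 : ℝ,
      ferroBulk c ξ Q11 Q12 M1 M2 ≥
        (Q11 ^ 2 + Q12 ^ 2 - (1 + c * ε / 2)) ^ 2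
          + (ξ * ε - 2 * c) / (4 * ε) * (M1 ^ 2 + M2 ^ 2 - ξ * ε / (ξ * ε - 2 * c)) ^ 2
          - (c * ε + c ^ 2 * ε ^ 2 / 4 + c * ξ / (2 * (ξ * ε - 2 * c)))) ∧
    ∃ K : ℝ, ∀ Q11 Q12 M1 M2 : ℝ, ferroBulk c ξ Q11 Q12 M1 M2 ≥ K :=
  ferroBulk_lower_bound_general hc.le hξ hε h.ne
end

section
/- Let c ≠ 0, ξ > 0, ρ > 0, σ > 0 and θ, φ be real numbers satisfying the critical-point equations of the ferronematic bulk potential: 4ρcos(θ)(ρ²−1) = cσ²cos(2φ), 4ρsin(θ)(ρ²−1) = cσ²sin(2φ), ξσcos(φ)(σ²−1) = 2σρc·cos(θ−φ), and ξσsin(φ)(σ²−1) = 2σρc·sin(θ−φ). Then sin(2φ−θ) = 0; equivalently, there exists an integer n such that 2φ − θ = nπ. -/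
open Real

theorem sin_sub_eq_zero_of_mul_cos_eq_of_mul_sin_eq {a b α β : ℝ} (hb : b ≠ 0)
    (hcos : a * cos α = b * cos β) (hsin : a * sin α = b * sin β) : sin (β - α) = 0 := by
  have hmul : b * sin (β - α) = 0 :=
    calc
      b * sin (β - α) = b * sin β * cos α - b * cos β * sin α := by rw [sin_sub]; ring
      _ = a * sin α * cos α - a * cos α * sin α := by rw [hsin, hcos]
      _ = 0 := by ring
  exact (mul_eq_zero.mp hmul).resolve_left hb

theorem alignment_constraint_general {c ρ σ θ φ : ℝ} (hc : c ≠ 0) (hσ : σ ≠ 0)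
    (hcos : 4 * ρ * cos θ * (ρ ^ 2 - 1) = c * σ ^ 2 * cos (2 * φ))
    (hsin : 4 * ρ * sin θ * (ρ ^ 2 - 1) = c * σ ^ 2 * sin (2 * φ)) :
    sin (2 * φ - θ) = 0 ∧ ∃ n : ℤ, 2 * φ - θ = n * π := by
  -- `(4ρ(ρ² - 1), θ)` and `(cσ², 2φ)` are signed polar coordinates of the same nonzero vector.
  have halign : sin (2 * φ - θ) = 0 :=
    sin_sub_eq_zero_of_mul_cos_eq_of_mul_sin_eq (a := 4 * ρ * (ρ ^ 2 - 1))
      (mul_ne_zero hc (pow_ne_zero 2 hσ)) (by rw [← hcos]; ring) (by rw [← hsin]; ring)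
  obtain ⟨n, hn⟩ := sin_eq_zero_iff.mp halign
  exact ⟨halign, n, hn.symm⟩

/-- Critical points of the ferronematic bulk potential in polar variables satisfy the
alignment constraint `2φ − θ = nπ`. -/
theorem alignment_constraint (c ξ ρ σ θ φ : ℝ) (hc : c ≠ 0) (hξ : 0 < ξ)
    (hρ : 0 < ρ) (hσ : 0 < σ)
    (h1 : 4 * ρ * Real.cos θ * (ρ ^ 2 - 1) = c * σ ^ 2 * Real.cos (2 * φ))
    (h2 : 4 * ρ * Real.sin θ * (ρ ^ 2 - 1) = c * σ ^ 2 * Real.sin (2 * φ))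
    (h3 : ξ * σ * Real.cos φ * (σ ^ 2 - 1) = 2 * σ * ρ * c * Real.cos (θ - φ))
    (h4 : ξ * σ * Real.sin φ * (σ ^ 2 - 1) = 2 * σ * ρ * c * Real.sin (θ - φ)) :
    Real.sin (2 * φ - θ) = 0 ∧ ∃ n : ℤ, 2 * φ - θ = n * π :=
  alignment_constraint_general hc hσ.ne' h1 h2
end

section
/- Let c ≠ 0, ξ > 0, ρ > 0, σ > 0 and θ, φ be real numbers satisfying the critical-point equations: 4ρcos(θ)(ρ²−1) = cσ²cos(2φ), 4ρsin(θ)(ρ²−1) = cσ²sin(2φ), ξσcos(φ)(σ²−1) = 2σρc·cos(θ−φ), ξσsin(φ)(σ²−1) = 2σρc·sin(θ−φ). If in addition 2φ − θ = 2nπ for some integer n, then σ² = 1 + 2ρc/ξ and ρ satisfies the cubic equation ρ³ − ρ(1 + c²/(2ξ)) − c/4 = 0. -/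
open Real

/-!
Each pair of critical-point equations equates two plane vectors given in signed polar form. Under
the alignment `2φ ≡ θ (mod 2π)`, hence `θ - φ ≡ φ`, the two vectors of each pair have the same polar
angle. Comparing signed lengths leaves two scalar equations, from which `σ ^ 2` is eliminated.
-/

theorem eq_of_mul_cos_eq_of_mul_sin_eq {a b α β : ℝ} (hαβ : (α : Angle) = β)
    (hcos : a * cos α = b * cos β) (hsin : a * sin α = b * sin β) : a = b := by
  rw [← Angle.cos_coe, ← Angle.cos_coe, hαβ, Angle.cos_coe] at hcos
  rw [← Angle.sin_coe, ← Angle.sin_coe, hαβ, Angle.sin_coe] at hsin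
  linear_combination cos β * hcos + sin β * hsin - (a - b) * sin_sq_add_cos_sq β

theorem eq_one_add_div_of_mul_sub_one_eq {K : Type*} [Field K] {k x y : K} (hk : k ≠ 0)
    (h : k * (x - 1) = y) : x = 1 + y / k :=
  eq_add_of_sub_eq' (eq_div_of_mul_eq hk (by rwa [mul_comm]))

theorem cubic_eq_zero_of_radial_eqs {K : Type*} [Field K] [CharZero K] {c ξ ρ s : K}
    (hs : s = 1 + 2 * ρ * c / ξ) (hρs : 4 * ρ * (ρ ^ 2 - 1) = c * s) :
    ρ ^ 3 - ρ * (1 + c ^ 2 / (2 * ξ)) - c / 4 = 0 := by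
  linear_combination hρs / 4 + c * hs / 4

/-- At a critical point of the ferronematic bulk potential with alignment
`2φ − θ = 2nπ`, one has `σ² = 1 + 2ρc/ξ` and `ρ` solves the cubic
`ρ³ − ρ(1 + c²/(2ξ)) − c/4 = 0`. -/
theorem critical_point_even_alignment (c ξ ρ σ θ φ : ℝ) (hc : c ≠ 0) (hξ : 0 < ξ)
    (hρ : 0 < ρ) (hσ : 0 < σ)
    (h1 : 4 * ρ * Real.cos θ * (ρ ^ 2 - 1) = c * σ ^ 2 * Real.cos (2 * φ))
    (h2 : 4 * ρ * Real.sin θ * (ρ ^ 2 - 1) = c * σ ^ 2 * Real.sin (2 * φ))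
    (h3 : ξ * σ * Real.cos φ * (σ ^ 2 - 1) = 2 * σ * ρ * c * Real.cos (θ - φ))
    (h4 : ξ * σ * Real.sin φ * (σ ^ 2 - 1) = 2 * σ * ρ * c * Real.sin (θ - φ))
    (halign : ∃ n : ℤ, 2 * φ - θ = 2 * n * π) :
    σ ^ 2 = 1 + 2 * ρ * c / ξ ∧ ρ ^ 3 - ρ * (1 + c ^ 2 / (2 * ξ)) - c / 4 = 0 := by
  obtain ⟨n, hn⟩ := halign
  have two_φ_coe : ((2 * φ : ℝ) : Angle) = θ :=
    Angle.angle_eq_iff_two_pi_dvd_sub.mpr ⟨n, by linear_combination hn⟩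
  have θ_sub_φ_coe : ((θ - φ : ℝ) : Angle) = φ := by
    rw [Angle.coe_sub, ← two_φ_coe, two_mul, Angle.coe_add, add_sub_cancel_right]
  have Q_radial : 4 * ρ * (ρ ^ 2 - 1) = c * σ ^ 2 :=
    eq_of_mul_cos_eq_of_mul_sin_eq two_φ_coe.symm
      (by linear_combination h1) (by linear_combination h2)
  have M_radial : σ * (ξ * (σ ^ 2 - 1)) = σ * (2 * ρ * c) :=
    eq_of_mul_cos_eq_of_mul_sin_eq θ_sub_φ_coe.symm
      (by linear_combination h3) (by linear_combination h4)
  have σ_sq : σ ^ 2 = 1 + 2 * ρ * c / ξ :=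
    eq_one_add_div_of_mul_sub_one_eq hξ.ne' (mul_left_cancel₀ hσ.ne' M_radial)
  exact ⟨σ_sq, cubic_eq_zero_of_radial_eqs σ_sq Q_radial⟩
end

section
/- For every c > 0, the cubic polynomial p(x) = x³ − (1 + c²/2)x − c/4 has exactly one positive real root ρ*(c); moreover this root satisfies ρ*(c) > 1. -/
/-!
On `x > 0` a root of `x ^ (n + 1) - a * x - b` is a point where `x ^ n - b / x` takes the value `a`.
For `b > 0` both `x ^ n` and `-b / x` increase with `x`, so this function is strictly increasing;
for `n ≠ 0` it runs from `-∞` at `0⁺` to `+∞`, hence takes every value exactly once. By the same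
monotonicity, the root lies to the right of every `t > 0` at which the polynomial is negative; for
the cubic `x³ − (1 + c²/2)x − c/4`, `t = 1` is such a point.
-/

open Set Filter Topology

theorem pow_succ_sub_mul_sub_eq_mul {K : Type*} [Field K] {x : K} (hx : x ≠ 0) (n : ℕ) (a b : K) :
    x ^ (n + 1) - a * x - b = x * (x ^ n - b / x - a) := by
  field_simp
  ring

theorem pow_succ_sub_mul_sub_eq_zero_iff {K : Type*} [Field K] {x : K} (hx : x ≠ 0) (n : ℕ)
    (a b : K) : x ^ (n + 1) - a * x - b = 0 ↔ x ^ n - b / x = a := by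
  rw [pow_succ_sub_mul_sub_eq_mul hx, mul_eq_zero_iff_left hx, sub_eq_zero]

theorem strictMonoOn_pow_sub_div {K : Type*} [Field K] [LinearOrder K] [IsStrictOrderedRing K]
    {b : K} (hb : 0 < b) (n : ℕ) : StrictMonoOn (fun x : K ↦ x ^ n - b / x) (Ioi 0) := by
  intro x hx y _ hxy
  have hpow : x ^ n ≤ y ^ n := pow_le_pow_left₀ (le_of_lt hx) hxy.le n
  have hdiv : b / y < b / x := div_lt_div_of_pos_left hb hx hxy
  linarith

theorem surjOn_pow_sub_div {n : ℕ} (hn : n ≠ 0) {b : ℝ} (hb : 0 < b) :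
    SurjOn (fun x : ℝ ↦ x ^ n - b / x) (Ioi 0) univ := by
  have hcont : ContinuousOn (fun x : ℝ ↦ x ^ n - b / x) (Ioi 0) :=
    (continuousOn_pow n).sub (continuousOn_const.div continuousOn_id fun _ hx ↦ ne_of_gt hx)
  have hzero : Tendsto (fun x : ℝ ↦ x ^ n - b / x) (𝓝[>] 0) atBot := by
    have hpow : Tendsto (fun x : ℝ ↦ x ^ n) (𝓝[>] 0) (𝓝 (0 ^ n)) :=
      (continuous_pow n).continuousWithinAt
    have hdiv : Tendsto (fun x : ℝ ↦ b / x) (𝓝[>] 0) atTop :=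
      tendsto_inv_nhdsGT_zero.const_mul_atTop hb
    exact hpow.add_atBot (tendsto_neg_atTop_atBot.comp hdiv)
  have htop : Tendsto (fun x : ℝ ↦ x ^ n - b / x) atTop atTop :=
    (tendsto_pow_atTop hn).atTop_add (tendsto_id.const_div_atTop b).neg
  exact hcont.surjOn_of_tendsto nonempty_Ioi
    ((tendsto_comp_coe_Ioi_atBot (.of_dense _)).mpr hzero) (tendsto_comp_val_Ioi_atTop.mpr htop)

theorem pow_succ_sub_mul_sub_neg_iff_lt {K : Type*} [Field K] [LinearOrder K]
    [IsStrictOrderedRing K] {n : ℕ} {a b t x : K} (hb : 0 < b) (ht : 0 < t) (hx : 0 < x)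
    (hroot : x ^ (n + 1) - a * x - b = 0) : t ^ (n + 1) - a * t - b < 0 ↔ t < x := by
  have hval : x ^ n - b / x = a := (pow_succ_sub_mul_sub_eq_zero_iff hx.ne' n a b).mp hroot
  calc t ^ (n + 1) - a * t - b < 0
    _ ↔ t * (t ^ n - b / t - a) < t * 0 := by
      rw [pow_succ_sub_mul_sub_eq_mul ht.ne', mul_zero]
    _ ↔ t ^ n - b / t < x ^ n - b / x := by
      rw [mul_lt_mul_iff_right₀ ht, sub_neg, hval]
    _ ↔ t < x := (strictMonoOn_pow_sub_div hb n).lt_iff_lt ht hx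

theorem existsUnique_pos_pow_succ_sub_mul_sub_eq_zero {n : ℕ} (hn : n ≠ 0) (a : ℝ) {b : ℝ}
    (hb : 0 < b) : ∃! x : ℝ, 0 < x ∧ x ^ (n + 1) - a * x - b = 0 := by
  obtain ⟨x, hx, hval⟩ := surjOn_pow_sub_div hn hb (mem_univ a)
  refine ⟨x, ⟨hx, (pow_succ_sub_mul_sub_eq_zero_iff (ne_of_gt hx) n a b).mpr hval⟩, ?_⟩
  rintro y ⟨hy, hroot⟩
  have hval_y : y ^ n - b / y = a := (pow_succ_sub_mul_sub_eq_zero_iff hy.ne' n a b).mp hroot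
  exact (strictMonoOn_pow_sub_div hb n).injOn hy hx (hval_y.trans hval.symm)

theorem cubic_unique_positive_root_general {n : ℕ} (hn : n ≠ 0) {a b t : ℝ} (hb : 0 < b)
    (ht : 0 < t) (hneg : t ^ (n + 1) - a * t - b < 0) :
    (∃! ρ : ℝ, 0 < ρ ∧ ρ ^ (n + 1) - a * ρ - b = 0) ∧
      ∀ ρ : ℝ, 0 < ρ → ρ ^ (n + 1) - a * ρ - b = 0 → t < ρ :=
  ⟨existsUnique_pos_pow_succ_sub_mul_sub_eq_zero hn a hb,
    fun _ hρ hroot ↦ (pow_succ_sub_mul_sub_neg_iff_lt hb ht hρ hroot).mp hneg⟩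

/-- For every `c > 0`, the cubic `x³ − (1 + c²/2)x − c/4` has exactly one positive
real root, and this root is greater than `1`. -/
theorem cubic_unique_positive_root (c : ℝ) (hc : 0 < c) :
    (∃! ρ : ℝ, 0 < ρ ∧ ρ ^ 3 - (1 + c ^ 2 / 2) * ρ - c / 4 = 0) ∧
    (∀ ρ : ℝ, 0 < ρ → ρ ^ 3 - (1 + c ^ 2 / 2) * ρ - c / 4 = 0 → 1 < ρ) := by
  have hneg : (1 : ℝ) ^ 3 - (1 + c ^ 2 / 2) * 1 - c / 4 < 0 := by linarith [sq_nonneg c]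
  exact cubic_unique_positive_root_general two_ne_zero (by positivity) one_pos hneg
end

section
/- Let ρ*(c) denote the unique positive root of x³ − (1 + c²/2)x − c/4 for c > 0. Then ρ*(c)/c → 1/√2 as c → ∞ (note (√2/4)^{1/3} = 1/√2), and the corresponding magnetisation amplitude satisfies (1 + 2cρ*(c))/c² → √2 as c → ∞; i.e., both the nematic and magnetic order amplitudes grow linearly in c for large c. -/
open Filter Topology

/-!
Dividing the cubic by `c³`, the ratio `y = ρ*(c)/c` is a positive root of `y³ = p y + q` with
`p = 1/2 + 1/c² → 1/2` and `q = 1/(4c²) → 0`. A positive root of such a depressed cubic with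
`q ≥ 0` lies between `s = √p` and `s + t`, where `t = q^(1/3)`: the equation gives `p ≤ y²`, while
`y > s + t` would make `y³ - p y ≥ y (y - s) (y + s)` exceed `t³ = q`. Hence `y → √(1/2)`, and the
second limit follows from `(1 + 2cρ*(c))/c² = 1/c² + 2ρ*(c)/c`.
-/

theorem sqrt_le_of_depressed_cubic {p q x : ℝ} (hq : 0 ≤ q) (hx : 0 < x)
    (hroot : x ^ 3 = p * x + q) : √p ≤ x := by
  refine (Real.sqrt_le_left hx.le).mpr (le_of_mul_le_mul_right ?_ hx)
  calc p * x ≤ p * x + q := le_add_of_nonneg_right hq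
    _ = x ^ 2 * x := by rw [← hroot, pow_succ]

theorem le_sqrt_add_rpow_of_depressed_cubic {p q x : ℝ} (hq : 0 ≤ q)
    (hroot : x ^ 3 = p * x + q) : x ≤ √p + q ^ (3⁻¹ : ℝ) := by
  set t := q ^ (3⁻¹ : ℝ)
  have ht : 0 ≤ t := Real.rpow_nonneg hq _
  have ht_cube : t ^ 3 = q := by exact_mod_cast Real.rpow_inv_natCast_pow hq three_ne_zero
  have hs : 0 ≤ √p := Real.sqrt_nonneg p
  -- Not an equality in general: `√p = 0` for negative `p`.
  have hp : p ≤ √p ^ 2 := (Real.sqrt_le_left hs).mp le_rfl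
  by_contra! hlt
  have hx : 0 < x := by linarith
  have hle : (x + √p) * x * (x - √p) ≤ t * t * t := by
    calc (x + √p) * x * (x - √p) = q - (√p ^ 2 - p) * x := by linear_combination hroot
      _ ≤ q := sub_le_self q (mul_nonneg (sub_nonneg.mpr hp) hx.le)
      _ = t * t * t := by rw [← ht_cube]; ring
  have hgt : t * t * t < (x + √p) * x * (x - √p) := by
    have hsq : t * t ≤ (x + √p) * x := by gcongr <;> linarith
    exact mul_lt_mul' hsq (lt_sub_iff_add_lt'.mpr hlt) ht (by positivity)
  exact hle.not_gt hgt

theorem tendsto_sqrt_of_depressed_cubic {ι : Type*} {l : Filter ι} {p q x : ι → ℝ} {P : ℝ}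
    (hp : Tendsto p l (𝓝 P)) (hq : Tendsto q l (𝓝 0)) (hq_nonneg : ∀ᶠ i in l, 0 ≤ q i)
    (hroot : ∀ᶠ i in l, 0 < x i ∧ x i ^ 3 = p i * x i + q i) :
    Tendsto x l (𝓝 (√P)) := by
  have hupper : Tendsto (fun i => √(p i) + q i ^ (3⁻¹ : ℝ)) l (𝓝 (√P)) := by
    simpa using hp.sqrt.add (hq.rpow_const (p := 3⁻¹) (Or.inr (by norm_num)))
  refine tendsto_of_tendsto_of_tendsto_of_le_of_le' hp.sqrt hupper ?_ ?_
  · filter_upwards [hq_nonneg, hroot] with i hqi ⟨hxi, hi⟩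
    exact sqrt_le_of_depressed_cubic hqi hxi hi
  · filter_upwards [hq_nonneg, hroot] with i hqi ⟨_, hi⟩
    exact le_sqrt_add_rpow_of_depressed_cubic hqi hi

theorem tendsto_inv_sq_atTop_zero : Tendsto (fun c : ℝ => (c ^ 2)⁻¹) atTop (𝓝 0) :=
  (tendsto_pow_atTop two_ne_zero).inv_tendsto_atTop

theorem depressed_cubic_div_of_cubic_root {c x : ℝ} (hc : c ≠ 0)
    (hroot : x ^ 3 - (1 + c ^ 2 / 2) * x - c / 4 = 0) :
    (x / c) ^ 3 = (1 / 2 + (c ^ 2)⁻¹) * (x / c) + 1 / 4 * (c ^ 2)⁻¹ := by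
  field_simp
  linear_combination 8 * hroot

theorem tendsto_one_add_two_mul_div_sq {ρ : ℝ → ℝ} {L : ℝ}
    (hρ : Tendsto (fun c => ρ c / c) atTop (𝓝 L)) :
    Tendsto (fun c => (1 + 2 * c * ρ c) / c ^ 2) atTop (𝓝 (2 * L)) := by
  have hsum : Tendsto (fun c => (c ^ 2)⁻¹ + 2 * (ρ c / c)) atTop (𝓝 (2 * L)) := by
    simpa only [zero_add] using tendsto_inv_sq_atTop_zero.add (hρ.const_mul 2)
  refine hsum.congr' ?_
  filter_upwards [eventually_ne_atTop 0] with c hc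
  field_simp

/-- Asymptotics of the unique positive root `ρ*(c)` of `x³ − (1 + c²/2)x − c/4`
as `c → ∞`: `ρ*(c)/c → 1/√2` and the squared magnetisation amplitude satisfies
`(1 + 2cρ*(c))/c² → √2`. -/
theorem rhoStar_asymptotics_c_to_infty (ρStar : ℝ → ℝ)
    (hρ : ∀ c : ℝ, 0 < c → 0 < ρStar c ∧
      (ρStar c) ^ 3 - (1 + c ^ 2 / 2) * ρStar c - c / 4 = 0) :
    Tendsto (fun c => ρStar c / c) atTop (𝓝 (1 / Real.sqrt 2)) ∧
    Tendsto (fun c => (1 + 2 * c * ρStar c) / c ^ 2) atTop (𝓝 (Real.sqrt 2)) := by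
  have hp : Tendsto (fun c : ℝ => 1 / 2 + (c ^ 2)⁻¹) atTop (𝓝 (1 / 2)) := by
    simpa only [add_zero] using tendsto_inv_sq_atTop_zero.const_add (1 / 2)
  have hq : Tendsto (fun c : ℝ => 1 / 4 * (c ^ 2)⁻¹) atTop (𝓝 0) := by
    simpa only [mul_zero] using tendsto_inv_sq_atTop_zero.const_mul (1 / 4)
  have hq_nonneg : ∀ᶠ c : ℝ in atTop, 0 ≤ 1 / 4 * (c ^ 2)⁻¹ := .of_forall fun c => by positivity
  have hratio : Tendsto (fun c => ρStar c / c) atTop (𝓝 (1 / √2)) := by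
    rw [← Real.sqrt_one, ← Real.sqrt_div zero_le_one]
    refine tendsto_sqrt_of_depressed_cubic hp hq hq_nonneg ?_
    filter_upwards [eventually_gt_atTop 0] with c hc
    obtain ⟨hpos, hroot⟩ := hρ c hc
    exact ⟨div_pos hpos hc, depressed_cubic_div_of_cubic_root hc.ne' hroot⟩
  refine ⟨hratio, ?_⟩
  simpa only [mul_one_div, Real.div_sqrt] using tendsto_one_add_two_mul_div_sq hratio
end

section
/- Maximum principle: let l > 0, c > 0, and let Q₁₁, Q₁₂, M₁, M₂ : ℝ → ℝ be twice continuously differentiable on [−1,1], satisfy on (−1,1) the system l·Q₁₁'' = 4Q₁₁(Q₁₁²+Q₁₂²−1) − c(M₁²−M₂²), l·Q₁₂'' = 4Q₁₂(Q₁₁²+Q₁₂²−1) − 2cM₁M₂, l·M₁'' = M₁(M₁²+M₂²−1) − 2cQ₁₁M₁ − 2cQ₁₂M₂, l·M₂'' = M₂(M₁²+M₂²−1) + 2cQ₁₁M₂ − 2cQ₁₂M₁, and satisfy the boundary conditions Q₁₁(−1)=M₁(−1)=1, Q₁₁(1)=M₁(1)=−1, Q₁₂(−1)=Q₁₂(1)=M₂(−1)=M₂(1)=0.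 Then for all y ∈ [−1,1]: Q₁₁(y)² + Q₁₂(y)² ≤ ρ*(c)² and M₁(y)² + M₂(y)² ≤ 1 + 2c·ρ*(c). -/
open Set

open scoped InnerProductSpace ComplexConjugate

/-!
In the complex variables `q = Q₁₁ + i Q₁₂` and `m = M₁ + i M₂` the system reads
`l q'' = 4(|q|² − 1)q − c m²` and `l m'' = (|m|² − 1)m − 2c q m̄`. Where `|γ|` has an interior
maximum, `⟪γ, γ''⟫ ≤ 0`. If `|q| ≤ R`, Cauchy–Schwarz and this condition for `m` give
`|m|² ≤ 1 + 2cR`. Taking for `R` the maximum of `|q|`, the condition for `q` then gives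
`R³ − (1 + c²/2)R − c/4 ≤ 0` unless the maximum is on the boundary, where `|q| = 1 ≤ ρ*`. Beyond
`ρ*` this cubic is positive, so `R ≤ ρ*`.
-/

section SecondOrderCondition

variable {E : Type*} [NormedAddCommGroup E] {γ : ℝ → E} {x : ℝ}

theorem hasDerivAt_deriv_of_contDiffAt_two [NormedSpace ℝ E] (hγ : ContDiffAt ℝ 2 γ x) :
    HasDerivAt (deriv γ) (deriv (deriv γ) x) x :=
  ((hγ.derivWithin (m := 1) (by norm_num)).differentiableAt one_ne_zero).hasDerivAt

theorem eventually_hasDerivAt_of_contDiffAt_two [NormedSpace ℝ E] (hγ : ContDiffAt ℝ 2 γ x) :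
    ∀ᶠ y in nhds x, HasDerivAt γ (deriv γ y) y := by
  filter_upwards [hγ.eventually (by simp)] with y hy
  exact (hy.differentiableAt two_ne_zero).hasDerivAt

theorem deriv_deriv_clm_comp [NormedSpace ℝ E] {F : Type*} [NormedAddCommGroup F]
    [NormedSpace ℝ F] (L : E →L[ℝ] F) (hγ : ContDiffAt ℝ 2 γ x) :
    deriv (deriv fun y ↦ L (γ y)) x = L (deriv (deriv γ) x) := by
  have hderiv : deriv (fun y ↦ L (γ y)) =ᶠ[nhds x] fun y ↦ L (deriv γ y) := by
    filter_upwards [eventually_hasDerivAt_of_contDiffAt_two hγ] with y hy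
    exact (L.hasFDerivAt.comp_hasDerivAt y hy).deriv
  rw [hderiv.deriv_eq]
  exact (L.hasFDerivAt.comp_hasDerivAt x (hasDerivAt_deriv_of_contDiffAt_two hγ)).deriv

theorem deriv_deriv_nonpos_of_isLocalMax {f : ℝ → ℝ} (hmax : IsLocalMax f x)
    (hf : ContinuousAt f x) : deriv (deriv f) x ≤ 0 := by
  by_contra! hpos
  have hmin : IsLocalMin f x := isLocalMin_of_deriv_deriv_pos hpos hmax.deriv_eq_zero hf
  have hconst : f =ᶠ[nhds x] fun _ ↦ f x := by
    filter_upwards [hmax, hmin] with y hle hge using le_antisymm hle hge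
  simp [hconst.deriv.deriv_eq] at hpos

variable [InnerProductSpace ℝ E]

theorem deriv_deriv_norm_sq (hγ : ContDiffAt ℝ 2 γ x) :
    deriv (deriv fun y ↦ ‖γ y‖ ^ 2) x =
      2 * (⟪γ x, deriv (deriv γ) x⟫_ℝ + ‖deriv γ x‖ ^ 2) := by
  have hev := eventually_hasDerivAt_of_contDiffAt_two hγ
  have hderiv : deriv (fun y ↦ ‖γ y‖ ^ 2) =ᶠ[nhds x] fun y ↦ 2 * ⟪γ y, deriv γ y⟫_ℝ := by
    filter_upwards [hev] with y hy using hy.norm_sq.deriv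
  rw [hderiv.deriv_eq, ← real_inner_self_eq_norm_sq]
  exact ((hev.self_of_nhds.inner ℝ (hasDerivAt_deriv_of_contDiffAt_two hγ)).const_mul 2).deriv

theorem inner_deriv_deriv_nonpos_of_isLocalMax_norm (hγ : ContDiffAt ℝ 2 γ x)
    (hmax : IsLocalMax (fun y ↦ ‖γ y‖) x) : ⟪γ x, deriv (deriv γ) x⟫_ℝ ≤ 0 := by
  have hmax_sq : IsLocalMax (fun y ↦ ‖γ y‖ ^ 2) x := by
    filter_upwards [hmax] with y hy
    gcongr
  have hle := deriv_deriv_nonpos_of_isLocalMax hmax_sq (hγ.continuousAt.norm.pow 2)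
  rw [deriv_deriv_norm_sq hγ] at hle
  linarith [sq_nonneg ‖deriv γ x‖]

theorem norm_le_of_inner_deriv_deriv_pos {a b K : ℝ} (hcont : ContinuousOn γ (Icc a b))
    (hγ : ContDiffOn ℝ 2 γ (Ioo a b)) (ha : ‖γ a‖ ≤ K) (hb : ‖γ b‖ ≤ K)
    (hpos : ∀ x ∈ Ioo a b, K < ‖γ x‖ → (∀ y ∈ Icc a b, ‖γ y‖ ≤ ‖γ x‖) →
      0 < ⟪γ x, deriv (deriv γ) x⟫_ℝ) :
    ∀ y ∈ Icc a b, ‖γ y‖ ≤ K := by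
  intro y hy
  obtain ⟨x, hx, hmax⟩ := isCompact_Icc.exists_isMaxOn ⟨y, hy⟩ hcont.norm
  refine (hmax hy).trans (le_of_not_gt fun hK ↦ ?_)
  have hx_int : x ∈ Ioo a b :=
    ⟨hx.1.lt_of_ne (by rintro rfl; exact hK.not_ge ha),
      hx.2.lt_of_ne (by rintro rfl; exact hK.not_ge hb)⟩
  have hnonpos := inner_deriv_deriv_nonpos_of_isLocalMax_norm
    (hγ.contDiffAt (isOpen_Ioo.mem_nhds hx_int))
    (hmax.isLocalMax (Icc_mem_nhds hx_int.1 hx_int.2))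
  exact (hpos x hx_int hK hmax).not_ge hnonpos

end SecondOrderCondition

section ComplexCurve

variable {f g : ℝ → ℝ}

theorem norm_sq_complex_mk (u v : ℝ) : ‖(⟨u, v⟩ : ℂ)‖ ^ 2 = u ^ 2 + v ^ 2 := by
  rw [Complex.sq_norm, Complex.normSq_mk, sq, sq]

theorem contDiffOn_complex_mk {n : WithTop ℕ∞} {s : Set ℝ} (hf : ContDiffOn ℝ n f s)
    (hg : ContDiffOn ℝ n g s) : ContDiffOn ℝ n (fun y ↦ (⟨f y, g y⟩ : ℂ)) s :=
  Complex.equivRealProdCLM.symm.contDiff.comp_contDiffOn (hf.prodMk hg)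

theorem deriv_deriv_complex_mk {x : ℝ}
    (hfg : ContDiffAt ℝ 2 (fun y ↦ (⟨f y, g y⟩ : ℂ)) x) :
    deriv (deriv fun y ↦ (⟨f y, g y⟩ : ℂ)) x = ⟨deriv (deriv f) x, deriv (deriv g) x⟩ :=
  Complex.ext (deriv_deriv_clm_comp Complex.reCLM hfg).symm
    (deriv_deriv_clm_comp Complex.imCLM hfg).symm

end ComplexCurve

/-- Classical solutions on `[a, b]` of the ferronematic Euler–Lagrange system, with the order
parameters encoded as complex numbers: `q = Q₁₁ + i Q₁₂` for the nematic tensor and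
`m = M₁ + i M₂` for the magnetization. -/
structure IsFerronematicSolution (l c a b : ℝ) (q m : ℝ → ℂ) : Prop where
  contDiffOn_nematic : ContDiffOn ℝ 2 q (Icc a b)
  contDiffOn_magnetic : ContDiffOn ℝ 2 m (Icc a b)
  nematic_eq : ∀ y ∈ Ioo a b,
    l • deriv (deriv q) y = (4 * (‖q y‖ ^ 2 - 1)) • q y - c • m y ^ 2
  magnetic_eq : ∀ y ∈ Ioo a b,
    l • deriv (deriv m) y = (‖m y‖ ^ 2 - 1) • m y - (2 * c) • (q y * conj (m y))

namespace IsFerronematicSolution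

variable {l c a b : ℝ} {q m : ℝ → ℂ}

theorem of_components {Q₁₁ Q₁₂ M₁ M₂ : ℝ → ℝ}
    (hQ₁₁ : ContDiffOn ℝ 2 Q₁₁ (Icc a b)) (hQ₁₂ : ContDiffOn ℝ 2 Q₁₂ (Icc a b))
    (hM₁ : ContDiffOn ℝ 2 M₁ (Icc a b)) (hM₂ : ContDiffOn ℝ 2 M₂ (Icc a b))
    (hode₁ : ∀ y ∈ Ioo a b, l * deriv (deriv Q₁₁) y =
      4 * Q₁₁ y * (Q₁₁ y ^ 2 + Q₁₂ y ^ 2 - 1) - c * (M₁ y ^ 2 - M₂ y ^ 2))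
    (hode₂ : ∀ y ∈ Ioo a b, l * deriv (deriv Q₁₂) y =
      4 * Q₁₂ y * (Q₁₁ y ^ 2 + Q₁₂ y ^ 2 - 1) - 2 * c * M₁ y * M₂ y)
    (hode₃ : ∀ y ∈ Ioo a b, l * deriv (deriv M₁) y =
      M₁ y * (M₁ y ^ 2 + M₂ y ^ 2 - 1) - 2 * c * Q₁₁ y * M₁ y - 2 * c * Q₁₂ y * M₂ y)
    (hode₄ : ∀ y ∈ Ioo a b, l * deriv (deriv M₂) y =
      M₂ y * (M₁ y ^ 2 + M₂ y ^ 2 - 1) + 2 * c * Q₁₁ y * M₂ y - 2 * c * Q₁₂ y * M₁ y) :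
    IsFerronematicSolution l c a b (fun y ↦ ⟨Q₁₁ y, Q₁₂ y⟩) (fun y ↦ ⟨M₁ y, M₂ y⟩) := by
  have hq := contDiffOn_complex_mk hQ₁₁ hQ₁₂
  have hm := contDiffOn_complex_mk hM₁ hM₂
  refine ⟨hq, hm, fun y hy ↦ ?_, fun y hy ↦ ?_⟩
  · rw [deriv_deriv_complex_mk (hq.contDiffAt (Icc_mem_nhds hy.1 hy.2)), norm_sq_complex_mk,
      sq (Complex.mk _ _)]
    apply Complex.ext
    · simp only [Complex.sub_re, Complex.smul_re, Complex.mul_re, smul_eq_mul]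
      linear_combination hode₁ y hy
    · simp only [Complex.sub_im, Complex.smul_im, Complex.mul_im, smul_eq_mul]
      linear_combination hode₂ y hy
  · rw [deriv_deriv_complex_mk (hm.contDiffAt (Icc_mem_nhds hy.1 hy.2)), norm_sq_complex_mk]
    apply Complex.ext
    · simp only [Complex.sub_re, Complex.smul_re, Complex.mul_re, Complex.conj_re,
        Complex.conj_im, smul_eq_mul]
      linear_combination hode₃ y hy
    · simp only [Complex.sub_im, Complex.smul_im, Complex.mul_im, Complex.conj_re,
        Complex.conj_im, smul_eq_mul]
      linear_combination hode₄ y hy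

theorem le_mul_inner_deriv_deriv_nematic (h : IsFerronematicSolution l c a b q m)
    (hc : 0 ≤ c) {x : ℝ} (hx : x ∈ Ioo a b) :
    4 * ‖q x‖ ^ 2 * (‖q x‖ ^ 2 - 1) - c * (‖q x‖ * ‖m x‖ ^ 2) ≤
      l * ⟪q x, deriv (deriv q) x⟫_ℝ := by
  have hcoupling : ⟪q x, m x ^ 2⟫_ℝ ≤ ‖q x‖ * ‖m x‖ ^ 2 := by
    rw [← norm_pow]
    exact real_inner_le_norm (q x) (m x ^ 2)
  calc 4 * ‖q x‖ ^ 2 * (‖q x‖ ^ 2 - 1) - c * (‖q x‖ * ‖m x‖ ^ 2)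
      ≤ 4 * ‖q x‖ ^ 2 * (‖q x‖ ^ 2 - 1) - c * ⟪q x, m x ^ 2⟫_ℝ := by gcongr
    _ = ⟪q x, l • deriv (deriv q) x⟫_ℝ := by
      rw [h.nematic_eq x hx, inner_sub_right, real_inner_smul_right, real_inner_smul_right,
        real_inner_self_eq_norm_sq]
      ring
    _ = l * ⟪q x, deriv (deriv q) x⟫_ℝ := real_inner_smul_right ..

theorem le_mul_inner_deriv_deriv_magnetic (h : IsFerronematicSolution l c a b q m)
    (hc : 0 ≤ c) {x : ℝ} (hx : x ∈ Ioo a b) :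
    ‖m x‖ ^ 2 * (‖m x‖ ^ 2 - (1 + 2 * c * ‖q x‖)) ≤ l * ⟪m x, deriv (deriv m) x⟫_ℝ := by
  have hcoupling : ⟪m x, q x * conj (m x)⟫_ℝ ≤ ‖m x‖ * (‖q x‖ * ‖m x‖) := by
    simpa only [norm_mul, RCLike.norm_conj] using real_inner_le_norm (m x) (q x * conj (m x))
  calc ‖m x‖ ^ 2 * (‖m x‖ ^ 2 - (1 + 2 * c * ‖q x‖))
      = (‖m x‖ ^ 2 - 1) * ‖m x‖ ^ 2 - 2 * c * (‖m x‖ * (‖q x‖ * ‖m x‖)) := by ring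
    _ ≤ (‖m x‖ ^ 2 - 1) * ‖m x‖ ^ 2 - 2 * c * ⟪m x, q x * conj (m x)⟫_ℝ := by gcongr
    _ = ⟪m x, l • deriv (deriv m) x⟫_ℝ := by
      rw [h.magnetic_eq x hx, inner_sub_right, real_inner_smul_right, real_inner_smul_right,
        real_inner_self_eq_norm_sq]
    _ = l * ⟪m x, deriv (deriv m) x⟫_ℝ := real_inner_smul_right ..

theorem norm_magnetic_sq_le (h : IsFerronematicSolution l c a b q m) (hl : 0 ≤ l)
    (hc : 0 ≤ c) {R : ℝ} (hq : ∀ y ∈ Icc a b, ‖q y‖ ≤ R)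
    (ha : ‖m a‖ ^ 2 ≤ 1 + 2 * c * R) (hb : ‖m b‖ ^ 2 ≤ 1 + 2 * c * R) :
    ∀ y ∈ Icc a b, ‖m y‖ ^ 2 ≤ 1 + 2 * c * R := by
  have hsqrt : ∀ y ∈ Icc a b, ‖m y‖ ≤ √(1 + 2 * c * R) := by
    refine norm_le_of_inner_deriv_deriv_pos h.contDiffOn_magnetic.continuousOn
      (h.contDiffOn_magnetic.mono Ioo_subset_Icc_self) (Real.le_sqrt_of_sq_le ha)
      (Real.le_sqrt_of_sq_le hb) fun x hx hlt _ ↦ pos_of_mul_pos_right ?_ hl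
    have hm_pos : 0 < ‖m x‖ := (Real.sqrt_nonneg _).trans_lt hlt
    have hexceeds : 1 + 2 * c * ‖q x‖ < ‖m x‖ ^ 2 :=
      calc 1 + 2 * c * ‖q x‖ ≤ 1 + 2 * c * R := by
            gcongr
            exact hq x (Ioo_subset_Icc_self hx)
        _ < ‖m x‖ ^ 2 := Real.lt_sq_of_sqrt_lt hlt
    exact (mul_pos (by positivity) (sub_pos.2 hexceeds)).trans_le
      (h.le_mul_inner_deriv_deriv_magnetic hc hx)
  intro y hy
  have hR : 0 ≤ R := (norm_nonneg _).trans (hq y hy)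
  exact (Real.le_sqrt (norm_nonneg _) (by positivity)).1 (hsqrt y hy)

end IsFerronematicSolution

theorem ferronematic_cubic_pos {c ρ R : ℝ} (hc : 0 ≤ c) (hρ : 0 < ρ)
    (hcubic : 0 ≤ ρ ^ 3 - (1 + c ^ 2 / 2) * ρ - c / 4) (hR : ρ < R) :
    0 < R ^ 3 - (1 + c ^ 2 / 2) * R - c / 4 := by
  have hR_pos := hρ.trans hR
  have hdiff : 0 < R * ρ * (R + ρ) * (R - ρ) + c / 4 * (R - ρ) :=
    add_pos_of_pos_of_nonneg (mul_pos (by positivity) (sub_pos.2 hR))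
      (mul_nonneg (by positivity) (sub_pos.2 hR).le)
  have hscaled : ρ * (R ^ 3 - (1 + c ^ 2 / 2) * R - c / 4) =
      R * (ρ ^ 3 - (1 + c ^ 2 / 2) * ρ - c / 4) +
        (R * ρ * (R + ρ) * (R - ρ) + c / 4 * (R - ρ)) := by ring
  refine pos_of_mul_pos_right ?_ hρ.le
  rw [hscaled]
  exact add_pos_of_nonneg_of_pos (mul_nonneg hR_pos.le hcubic) hdiff

theorem one_le_of_ferronematic_cubic_nonneg {c ρ : ℝ} (hc : 0 ≤ c) (hρ : 0 < ρ)
    (hcubic : 0 ≤ ρ ^ 3 - (1 + c ^ 2 / 2) * ρ - c / 4) : 1 ≤ ρ := by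
  by_contra! hlt
  have hpos := ferronematic_cubic_pos hc hρ hcubic hlt
  linarith [sq_nonneg c]

theorem ferro_maximum_principle_general {l c a b ρ : ℝ} {q m : ℝ → ℂ} (hl : 0 ≤ l)
    (hc : 0 ≤ c) (hρ : 0 < ρ) (hcubic : 0 ≤ ρ ^ 3 - (1 + c ^ 2 / 2) * ρ - c / 4)
    (h : IsFerronematicSolution l c a b q m) (hqa : ‖q a‖ ≤ ρ) (hqb : ‖q b‖ ≤ ρ)
    (hma : ‖m a‖ ^ 2 ≤ 1 + 2 * c * ρ) (hmb : ‖m b‖ ^ 2 ≤ 1 + 2 * c * ρ) :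
    ∀ y ∈ Icc a b, ‖q y‖ ≤ ρ ∧ ‖m y‖ ^ 2 ≤ 1 + 2 * c * ρ := by
  have hq : ∀ y ∈ Icc a b, ‖q y‖ ≤ ρ := by
    refine norm_le_of_inner_deriv_deriv_pos h.contDiffOn_nematic.continuousOn
      (h.contDiffOn_nematic.mono Ioo_subset_Icc_self) hqa hqb
      fun x hx hlt hmax ↦ pos_of_mul_pos_right ?_ hl
    have hm : ‖m x‖ ^ 2 ≤ 1 + 2 * c * ‖q x‖ :=
      h.norm_magnetic_sq_le hl hc hmax (hma.trans (by gcongr)) (hmb.trans (by gcongr)) x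
        (Ioo_subset_Icc_self hx)
    have hcubic_pos := ferronematic_cubic_pos hc hρ hcubic hlt
    have hq_pos := hρ.trans hlt
    calc 0 < 4 * ‖q x‖ * (‖q x‖ ^ 3 - (1 + c ^ 2 / 2) * ‖q x‖ - c / 4) :=
          mul_pos (by positivity) hcubic_pos
      _ = 4 * ‖q x‖ ^ 2 * (‖q x‖ ^ 2 - 1) - c * (‖q x‖ * (1 + 2 * c * ‖q x‖)) := by ring
      _ ≤ 4 * ‖q x‖ ^ 2 * (‖q x‖ ^ 2 - 1) - c * (‖q x‖ * ‖m x‖ ^ 2) := by gcongr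
      _ ≤ l * ⟪q x, deriv (deriv q) x⟫_ℝ := h.le_mul_inner_deriv_deriv_nematic hc hx
  exact fun y hy ↦ ⟨hq y hy, h.norm_magnetic_sq_le hl hc hq hma hmb y hy⟩

/-- Maximum principle for solutions of the ferronematic Euler–Lagrange system:
`|Q|² ≤ ρ*(c)²` and `|M|² ≤ 1 + 2cρ*(c)`, where `ρ*(c)` is the unique positive
root of `x³ − (1 + c²/2)x − c/4`. -/
theorem ferro_maximum_principle (l c ρStar : ℝ) (hl : 0 < l) (hc : 0 < c)
    (hρpos : 0 < ρStar)
    (hρroot : ρStar ^ 3 - (1 + c ^ 2 / 2) * ρStar - c / 4 = 0)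
    (Q11 Q12 M1 M2 : ℝ → ℝ)
    (hQ11 : ContDiffOn ℝ 2 Q11 (Icc (-1) 1))
    (hQ12 : ContDiffOn ℝ 2 Q12 (Icc (-1) 1))
    (hM1 : ContDiffOn ℝ 2 M1 (Icc (-1) 1))
    (hM2 : ContDiffOn ℝ 2 M2 (Icc (-1) 1))
    (hode1 : ∀ y ∈ Ioo (-1 : ℝ) 1, l * deriv (deriv Q11) y =
      4 * Q11 y * ((Q11 y) ^ 2 + (Q12 y) ^ 2 - 1) - c * ((M1 y) ^ 2 - (M2 y) ^ 2))
    (hode2 : ∀ y ∈ Ioo (-1 : ℝ) 1, l * deriv (deriv Q12) y =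
      4 * Q12 y * ((Q11 y) ^ 2 + (Q12 y) ^ 2 - 1) - 2 * c * M1 y * M2 y)
    (hode3 : ∀ y ∈ Ioo (-1 : ℝ) 1, l * deriv (deriv M1) y =
      M1 y * ((M1 y) ^ 2 + (M2 y) ^ 2 - 1) - 2 * c * Q11 y * M1 y - 2 * c * Q12 y * M2 y)
    (hode4 : ∀ y ∈ Ioo (-1 : ℝ) 1, l * deriv (deriv M2) y =
      M2 y * ((M1 y) ^ 2 + (M2 y) ^ 2 - 1) + 2 * c * Q11 y * M2 y - 2 * c * Q12 y * M1 y)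
    (hbc1 : Q11 (-1) = 1) (hbc2 : M1 (-1) = 1)
    (hbc3 : Q11 1 = -1) (hbc4 : M1 1 = -1)
    (hbc5 : Q12 (-1) = 0) (hbc6 : Q12 1 = 0)
    (hbc7 : M2 (-1) = 0) (hbc8 : M2 1 = 0) :
    ∀ y ∈ Icc (-1 : ℝ) 1,
      (Q11 y) ^ 2 + (Q12 y) ^ 2 ≤ ρStar ^ 2 ∧
      (M1 y) ^ 2 + (M2 y) ^ 2 ≤ 1 + 2 * c * ρStar := by
  have hρ : 1 ≤ ρStar := one_le_of_ferronematic_cubic_nonneg hc.le hρpos hρroot.ge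
  have hone : 1 ≤ 1 + 2 * c * ρStar := le_add_of_nonneg_right (by positivity)
  intro y hy
  obtain ⟨hQ, hM⟩ := ferro_maximum_principle_general hl.le hc.le hρpos hρroot.ge
    (.of_components hQ11 hQ12 hM1 hM2 hode1 hode2 hode3 hode4)
    (by simp [Complex.norm_def, Complex.normSq_mk, hbc1, hbc5, hρ])
    (by simp [Complex.norm_def, Complex.normSq_mk, hbc3, hbc6, hρ])
    (by simp [norm_sq_complex_mk, hbc2, hbc7, hone])
    (by simp [norm_sq_complex_mk, hbc4, hbc8, hone]) y hy
  exact ⟨norm_sq_complex_mk .. ▸ pow_le_pow_left₀ (norm_nonneg _) hQ 2,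
    norm_sq_complex_mk .. ▸ hM⟩
end

section
/- Second variation identity: let l, c ∈ ℝ and let Q*, M*, g, h, v, w : ℝ → ℝ be continuously differentiable on [−1,1]. For t ∈ ℝ define F(t) = ∫_{−1}^{1} [ (l/2)((Q*' + tg')² + t²h'²) + ((Q*+tg)² + t²h² − 1)² + (l/2)((M*' + tv')² + t²w'²) + (1/4)((M*+tv)² + t²w² − 1)² − c(Q*+tg)((M*+tv)² − t²w²) − 2c·(th)·(M*+tv)·(tw) ] dy. Then t ↦ F(t) is twice differentiable and F''(0) = ∫_{−1}^{1} [ l g'² + l v'² + 4(3Q*²−1)g² + (3M*²−1)v² − 4c g M* v − 2c Q* v² ] dy + ∫_{−1}^{1} [ l h'² + l w'² + 4(Q*²−1)h² + (M*²−1)w² + 2c Q* w² − 4c h w M* ] dy. -/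
open Set intervalIntegral

/-!
Along the ray `t ↦ z + tζ` the energy density is a quartic polynomial in `t`. For profiles in `H¹`
its coefficients are integrable, so the energy itself is a quartic polynomial in `t`, and its second
derivative at `0` is twice the integral of the quadratic coefficient. At an order-reconstruction
profile this coefficient is invariant under the reflection `(Q₁₂, M₂) ↦ (-Q₁₂, -M₂)`, so the terms
mixing the in-plane directions `(g, v)` with the out-of-plane directions `(h, w)` vanish.
-/

open MeasureTheory
open scoped Interval Nat

section PolynomialFamily

variable {a b : ℝ} {n : ℕ} {f : Fin n → ℝ → ℝ} {F : ℝ → ℝ}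

theorem eq_sum_pow_mul_integral (hf : ∀ i, IntervalIntegrable (f i) volume a b)
    (hF : ∀ t, F t = ∫ y in a..b, ∑ i : Fin n, t ^ (i : ℕ) * f i y) :
    F = fun t => ∑ i : Fin n, t ^ (i : ℕ) * ∫ y in a..b, f i y := by
  funext t
  rw [hF, integral_finsetSum fun i _ => (hf i).const_mul _]
  simp only [intervalIntegral.integral_const_mul]

theorem contDiff_of_eq_integral_sum_pow_mul (hf : ∀ i, IntervalIntegrable (f i) volume a b)
    (hF : ∀ t, F t = ∫ y in a..b, ∑ i : Fin n, t ^ (i : ℕ) * f i y) {m : WithTop ℕ∞} :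
    ContDiff ℝ m F := by
  rw [eq_sum_pow_mul_integral hf hF]
  exact ContDiff.sum fun i _ => by fun_prop

theorem iteratedDeriv_zero_of_eq_integral_sum_pow_mul
    (hf : ∀ i, IntervalIntegrable (f i) volume a b)
    (hF : ∀ t, F t = ∫ y in a..b, ∑ i : Fin n, t ^ (i : ℕ) * f i y) (k : Fin n) :
    iteratedDeriv k F 0 = (k : ℕ)! * ∫ y in a..b, f k y := by
  rw [eq_sum_pow_mul_integral hf hF, iteratedDeriv_fun_sum fun i _ => by fun_prop]
  simp only [iteratedDeriv_mul_const_field, iteratedDeriv_fun_pow_zero, Fin.val_inj]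
  simp

end PolynomialFamily

section Sobolev

/-- The Sobolev space `H¹` of the interval with endpoints `a` and `b`, in its one-dimensional
description: absolutely continuous functions with square-integrable derivative. It is the natural
domain of the ferronematic energy. -/
structure MemH1 (u : ℝ → ℝ) (a b : ℝ) : Prop where
  absolutelyContinuousOnInterval : AbsolutelyContinuousOnInterval u a b
  memLp_deriv : MemLp (deriv u) 2 (volume.restrict (Ι a b))

variable {a b : ℝ} {u : ℝ → ℝ}

theorem MemH1.continuousOn (hu : MemH1 u a b) : ContinuousOn u [[a, b]] :=
  hu.absolutelyContinuousOnInterval.continuousOn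

theorem memH1_of_lipschitzOnWith {K : NNReal} (hu : LipschitzOnWith K u [[a, b]]) :
    MemH1 u a b := by
  refine ⟨hu.absolutelyContinuousOnInterval, ?_⟩
  rw [uIoc, ← restrict_Ioo_eq_restrict_Ioc]
  refine .of_bound (measurable_deriv u).aestronglyMeasurable K ?_
  rw [ae_restrict_iff' measurableSet_Ioo]
  filter_upwards with y hy
  exact norm_deriv_le_of_lipschitzOn (Icc_mem_nhds hy.1 hy.2) hu

theorem memH1_of_contDiffOn (hab : a ≤ b) (hu : ContDiffOn ℝ 1 u (Icc a b)) : MemH1 u a b := by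
  obtain ⟨K, hK⟩ := hu.exists_lipschitzOnWith one_ne_zero (convex_Icc a b) isCompact_Icc
  exact memH1_of_lipschitzOnWith (uIcc_of_le hab ▸ hK)

end Sobolev

section Density

/-- The nemato-magnetic coupling `Q₁₁(M₁² - M₂²) + 2 Q₁₂M₁M₂`, i.e. `Q M · M`, as a function of
`z = (Q₁₁, Q₁₂, M₁, M₂)`. -/
def magneticCoupling (z : Fin 4 → ℝ) : ℝ :=
  z 0 * (z 2 ^ 2 - z 3 ^ 2) + 2 * z 1 * z 2 * z 3

/-- The derivative of `magneticCoupling` at `z` in the direction `ζ`. The coupling is a cubic form,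
so `magneticCouplingDeriv ζ z` is half its second derivative at `z` in the direction `ζ`. -/
def magneticCouplingDeriv (z ζ : Fin 4 → ℝ) : ℝ :=
  ζ 0 * (z 2 ^ 2 - z 3 ^ 2) + 2 * ζ 1 * z 2 * z 3
    + 2 * z 0 * (z 2 * ζ 2 - z 3 * ζ 3) + 2 * z 1 * (ζ 2 * z 3 + z 2 * ζ 3)

/-- The ferronematic energy density (with `ξ = 1`) at the value `z = (Q₁₁, Q₁₂, M₁, M₂)` of the
fields and the value `p` of their derivatives. -/
noncomputable def ferronematicDensity (l c : ℝ) (z p : Fin 4 → ℝ) : ℝ :=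
  l / 2 * (p ⬝ᵥ p) + ((z 0 ^ 2 + z 1 ^ 2 - 1) ^ 2 + 1 / 4 * (z 2 ^ 2 + z 3 ^ 2 - 1) ^ 2
    - c * magneticCoupling z)

/-- The integrand of the second variation of the ferronematic energy at the field value `z`, in the
direction `ζ` with derivative `π`. The density is quadratic in the derivatives of the fields, so
those do not enter. -/
def ferronematicHessian (l c : ℝ) (z ζ π : Fin 4 → ℝ) : ℝ :=
  l * (π ⬝ᵥ π) + (4 * (z 0 ^ 2 + z 1 ^ 2 - 1) * (ζ 0 ^ 2 + ζ 1 ^ 2)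
    + 8 * (z 0 * ζ 0 + z 1 * ζ 1) ^ 2 + (z 2 ^ 2 + z 3 ^ 2 - 1) * (ζ 2 ^ 2 + ζ 3 ^ 2)
    + 2 * (z 2 * ζ 2 + z 3 * ζ 3) ^ 2 - 2 * c * magneticCouplingDeriv ζ z)

/-- The coefficients of the quartic polynomial `t ↦ ferronematicDensity l c (z + tζ) (p + tπ)`. -/
noncomputable def ferronematicTaylorCoeff (l c : ℝ) (z p ζ π : Fin 4 → ℝ) : Fin 5 → ℝ
  | 0 => ferronematicDensity l c z p
  | 1 => l * (p ⬝ᵥ π) + (4 * (z 0 ^ 2 + z 1 ^ 2 - 1) * (z 0 * ζ 0 + z 1 * ζ 1)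
      + (z 2 ^ 2 + z 3 ^ 2 - 1) * (z 2 * ζ 2 + z 3 * ζ 3) - c * magneticCouplingDeriv z ζ)
  | 2 => 1 / 2 * ferronematicHessian l c z ζ π
  | 3 => 4 * (z 0 * ζ 0 + z 1 * ζ 1) * (ζ 0 ^ 2 + ζ 1 ^ 2)
      + (z 2 * ζ 2 + z 3 * ζ 3) * (ζ 2 ^ 2 + ζ 3 ^ 2) - c * magneticCoupling ζ
  | 4 => (ζ 0 ^ 2 + ζ 1 ^ 2) ^ 2 + 1 / 4 * (ζ 2 ^ 2 + ζ 3 ^ 2) ^ 2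

theorem ferronematicDensity_add_smul (l c t : ℝ) (z p ζ π : Fin 4 → ℝ) :
    ferronematicDensity l c (z + t • ζ) (p + t • π) =
      ∑ i : Fin 5, t ^ (i : ℕ) * ferronematicTaylorCoeff l c z p ζ π i := by
  simp only [Fin.sum_univ_five, Fin.sum_univ_four, dotProduct, Pi.add_apply, Pi.smul_apply,
    smul_eq_mul, Fin.coe_ofNat_eq_mod, Nat.reduceMod, ferronematicTaylorCoeff,
    ferronematicDensity, ferronematicHessian, magneticCoupling, magneticCouplingDeriv]
  ring

theorem ferronematicDensity_orderReconstruction_add_smul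
    (l c t Q M g h v w Q' M' g' h' v' w' : ℝ) :
    ferronematicDensity l c (![Q, 0, M, 0] + t • ![g, h, v, w])
        (![Q', 0, M', 0] + t • ![g', h', v', w']) =
      l / 2 * ((Q' + t * g') ^ 2 + t ^ 2 * h' ^ 2)
        + ((Q + t * g) ^ 2 + t ^ 2 * h ^ 2 - 1) ^ 2
        + l / 2 * ((M' + t * v') ^ 2 + t ^ 2 * w' ^ 2)
        + 1 / 4 * ((M + t * v) ^ 2 + t ^ 2 * w ^ 2 - 1) ^ 2
        - c * (Q + t * g) * ((M + t * v) ^ 2 - t ^ 2 * w ^ 2)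
        - 2 * c * (t * h) * (M + t * v) * (t * w) := by
  simp only [Fin.sum_univ_four, dotProduct, Pi.add_apply, Pi.smul_apply, smul_eq_mul,
    Matrix.cons_val, ferronematicDensity, magneticCoupling]
  ring

theorem ferronematicHessian_orderReconstruction_eq_add (l c Q M g h v w g' h' v' w' : ℝ) :
    ferronematicHessian l c ![Q, 0, M, 0] ![g, h, v, w] ![g', h', v', w'] =
      ferronematicHessian l c ![Q, 0, M, 0] ![g, 0, v, 0] ![g', 0, v', 0]
        + ferronematicHessian l c ![Q, 0, M, 0] ![0, h, 0, w] ![0, h', 0, w'] := by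
  simp only [Fin.sum_univ_four, dotProduct, Matrix.cons_val, ferronematicHessian,
    magneticCouplingDeriv]
  ring

theorem ferronematicHessian_orderReconstruction_inPlane (l c Q M g v g' v' : ℝ) :
    ferronematicHessian l c ![Q, 0, M, 0] ![g, 0, v, 0] ![g', 0, v', 0] =
      l * g' ^ 2 + l * v' ^ 2 + 4 * (3 * Q ^ 2 - 1) * g ^ 2 + (3 * M ^ 2 - 1) * v ^ 2
        - 4 * c * g * M * v - 2 * c * Q * v ^ 2 := by
  simp only [Fin.sum_univ_four, dotProduct, Matrix.cons_val, ferronematicHessian,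
    magneticCouplingDeriv]
  ring

theorem ferronematicHessian_orderReconstruction_outOfPlane (l c Q M h w h' w' : ℝ) :
    ferronematicHessian l c ![Q, 0, M, 0] ![0, h, 0, w] ![0, h', 0, w'] =
      l * h' ^ 2 + l * w' ^ 2 + 4 * (Q ^ 2 - 1) * h ^ 2 + (M ^ 2 - 1) * w ^ 2
        + 2 * c * Q * w ^ 2 - 4 * c * h * w * M := by
  simp only [Fin.sum_univ_four, dotProduct, Matrix.cons_val, ferronematicHessian,
    magneticCouplingDeriv]
  ring

end Density

section Integrability

variable {a b : ℝ}

theorem memLp_vec_four {α : Type*} {m : MeasurableSpace α} {μ : Measure α} {q : ENNReal}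
    {f₀ f₁ f₂ f₃ : α → ℝ} (h₀ : MemLp f₀ q μ) (h₁ : MemLp f₁ q μ) (h₂ : MemLp f₂ q μ)
    (h₃ : MemLp f₃ q μ) : MemLp (fun y => ![f₀ y, f₁ y, f₂ y, f₃ y]) q μ := by
  simp [memLp_pi_iff, Fin.forall_fin_succ, h₀, h₁, h₂, h₃]

theorem intervalIntegrable_dotProduct {ι : Type*} [Fintype ι] {p π : ℝ → ι → ℝ}
    (hp : MemLp p 2 (volume.restrict (Ι a b))) (hπ : MemLp π 2 (volume.restrict (Ι a b))) :
    IntervalIntegrable (fun y => p y ⬝ᵥ π y) volume a b :=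
  intervalIntegrable_iff.2 <|
    integrable_finsetSum _ fun i _ => (hp.eval i).integrable_mul (hπ.eval i)

theorem intervalIntegrable_const_mul_dotProduct_add {ι : Type*} [Fintype ι] {p π : ℝ → ι → ℝ}
    {f : ℝ → ℝ} (k : ℝ) (hp : MemLp p 2 (volume.restrict (Ι a b)))
    (hπ : MemLp π 2 (volume.restrict (Ι a b))) (hf : ContinuousOn f [[a, b]]) :
    IntervalIntegrable (fun y => k * (p y ⬝ᵥ π y) + f y) volume a b :=
  ((intervalIntegrable_dotProduct hp hπ).const_mul k).add hf.intervalIntegrable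

variable {z p ζ π : ℝ → Fin 4 → ℝ}

theorem intervalIntegrable_ferronematicHessian (l c : ℝ) (hz : ContinuousOn z [[a, b]])
    (hζ : ContinuousOn ζ [[a, b]]) (hπ : MemLp π 2 (volume.restrict (Ι a b))) :
    IntervalIntegrable (fun y => ferronematicHessian l c (z y) (ζ y) (π y)) volume a b := by
  refine intervalIntegrable_const_mul_dotProduct_add l hπ hπ ?_
  unfold magneticCouplingDeriv
  fun_prop

theorem intervalIntegrable_ferronematicTaylorCoeff (l c : ℝ) (hz : ContinuousOn z [[a, b]])
    (hp : MemLp p 2 (volume.restrict (Ι a b))) (hζ : ContinuousOn ζ [[a, b]])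
    (hπ : MemLp π 2 (volume.restrict (Ι a b))) (i : Fin 5) :
    IntervalIntegrable (fun y => ferronematicTaylorCoeff l c (z y) (p y) (ζ y) (π y) i)
      volume a b := by
  match i with
  | 0 =>
    refine intervalIntegrable_const_mul_dotProduct_add (l / 2) hp hp ?_
    unfold magneticCoupling
    fun_prop
  | 1 =>
    refine intervalIntegrable_const_mul_dotProduct_add l hp hπ ?_
    unfold magneticCouplingDeriv
    fun_prop
  | 2 => exact (intervalIntegrable_ferronematicHessian l c hz hζ hπ).const_mul (1 / 2)
  | 3 =>
    refine ContinuousOn.intervalIntegrable ?_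
    simp only [ferronematicTaylorCoeff, magneticCoupling]
    fun_prop
  | 4 =>
    refine ContinuousOn.intervalIntegrable ?_
    simp only [ferronematicTaylorCoeff]
    fun_prop

end Integrability

section SecondVariation

variable {a b l c : ℝ} {z p ζ π : ℝ → Fin 4 → ℝ} {F : ℝ → ℝ}

theorem eq_integral_ferronematicTaylorCoeff
    (hF : ∀ t, F t = ∫ y in a..b, ferronematicDensity l c (z y + t • ζ y) (p y + t • π y)) (t : ℝ) :
    F t = ∫ y in a..b, ∑ i : Fin 5, t ^ (i : ℕ) *
      ferronematicTaylorCoeff l c (z y) (p y) (ζ y) (π y) i := by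
  simp only [hF, ferronematicDensity_add_smul]

theorem contDiff_ferronematicEnergy (hz : ContinuousOn z [[a, b]])
    (hp : MemLp p 2 (volume.restrict (Ι a b))) (hζ : ContinuousOn ζ [[a, b]])
    (hπ : MemLp π 2 (volume.restrict (Ι a b)))
    (hF : ∀ t, F t = ∫ y in a..b, ferronematicDensity l c (z y + t • ζ y) (p y + t • π y))
    {m : WithTop ℕ∞} : ContDiff ℝ m F :=
  contDiff_of_eq_integral_sum_pow_mul
    (intervalIntegrable_ferronematicTaylorCoeff l c hz hp hζ hπ)
    (eq_integral_ferronematicTaylorCoeff hF)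

theorem deriv_deriv_ferronematicEnergy_zero (hz : ContinuousOn z [[a, b]])
    (hp : MemLp p 2 (volume.restrict (Ι a b))) (hζ : ContinuousOn ζ [[a, b]])
    (hπ : MemLp π 2 (volume.restrict (Ι a b)))
    (hF : ∀ t, F t = ∫ y in a..b, ferronematicDensity l c (z y + t • ζ y) (p y + t • π y)) :
    deriv (deriv F) 0 = ∫ y in a..b, ferronematicHessian l c (z y) (ζ y) (π y) := by
  have h := iteratedDeriv_zero_of_eq_integral_sum_pow_mul
    (intervalIntegrable_ferronematicTaylorCoeff l c hz hp hζ hπ)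
    (eq_integral_ferronematicTaylorCoeff hF) 2
  simpa [iteratedDeriv_succ, ferronematicTaylorCoeff] using h

theorem integral_ferronematicHessian_orderReconstruction {Q M g h v w g' h' v' w' : ℝ → ℝ}
    (hQ : ContinuousOn Q [[a, b]]) (hM : ContinuousOn M [[a, b]]) (hg : ContinuousOn g [[a, b]])
    (hh : ContinuousOn h [[a, b]]) (hv : ContinuousOn v [[a, b]]) (hw : ContinuousOn w [[a, b]])
    (hg' : MemLp g' 2 (volume.restrict (Ι a b))) (hh' : MemLp h' 2 (volume.restrict (Ι a b)))
    (hv' : MemLp v' 2 (volume.restrict (Ι a b))) (hw' : MemLp w' 2 (volume.restrict (Ι a b))) :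
    ∫ y in a..b, ferronematicHessian l c ![Q y, 0, M y, 0] ![g y, h y, v y, w y]
        ![g' y, h' y, v' y, w' y] =
      (∫ y in a..b, ferronematicHessian l c ![Q y, 0, M y, 0] ![g y, 0, v y, 0]
        ![g' y, 0, v' y, 0])
      + ∫ y in a..b, ferronematicHessian l c ![Q y, 0, M y, 0] ![0, h y, 0, w y]
        ![0, h' y, 0, w' y] := by
  simp only [ferronematicHessian_orderReconstruction_eq_add l c _ _ (g _) (h _)]
  have hz : ContinuousOn (fun y => ![Q y, 0, M y, 0]) [[a, b]] := by fun_prop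
  exact integral_add
    (intervalIntegrable_ferronematicHessian l c hz (by fun_prop)
      (memLp_vec_four hg' .zero' hv' .zero'))
    (intervalIntegrable_ferronematicHessian l c hz (by fun_prop)
      (memLp_vec_four .zero' hh' .zero' hw'))

end SecondVariation

theorem second_variation_identity_general {a b : ℝ} (l c : ℝ) (Qs Ms g h v w : ℝ → ℝ)
    (hQs : MemH1 Qs a b) (hMs : MemH1 Ms a b) (hg : MemH1 g a b) (hh : MemH1 h a b)
    (hv : MemH1 v a b) (hw : MemH1 w a b) (F : ℝ → ℝ)
    (hF : ∀ t : ℝ, F t = ∫ y in a..b,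
      (l / 2 * ((deriv Qs y + t * deriv g y) ^ 2 + t ^ 2 * (deriv h y) ^ 2)
        + ((Qs y + t * g y) ^ 2 + t ^ 2 * (h y) ^ 2 - 1) ^ 2
        + l / 2 * ((deriv Ms y + t * deriv v y) ^ 2 + t ^ 2 * (deriv w y) ^ 2)
        + 1 / 4 * ((Ms y + t * v y) ^ 2 + t ^ 2 * (w y) ^ 2 - 1) ^ 2
        - c * (Qs y + t * g y) * ((Ms y + t * v y) ^ 2 - t ^ 2 * (w y) ^ 2)
        - 2 * c * (t * h y) * (Ms y + t * v y) * (t * w y))) :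
    (∀ t : ℝ, DifferentiableAt ℝ F t) ∧
    (∀ t : ℝ, DifferentiableAt ℝ (deriv F) t) ∧
    deriv (deriv F) 0 =
      (∫ y in a..b,
        (l * (deriv g y) ^ 2 + l * (deriv v y) ^ 2
          + 4 * (3 * (Qs y) ^ 2 - 1) * (g y) ^ 2 + (3 * (Ms y) ^ 2 - 1) * (v y) ^ 2
          - 4 * c * g y * Ms y * v y - 2 * c * Qs y * (v y) ^ 2))
      + ∫ y in a..b,
        (l * (deriv h y) ^ 2 + l * (deriv w y) ^ 2
          + 4 * ((Qs y) ^ 2 - 1) * (h y) ^ 2 + ((Ms y) ^ 2 - 1) * (w y) ^ 2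
          + 2 * c * Qs y * (w y) ^ 2 - 4 * c * h y * w y * Ms y) := by
  have hQs_cont := hQs.continuousOn
  have hMs_cont := hMs.continuousOn
  have hg_cont := hg.continuousOn
  have hh_cont := hh.continuousOn
  have hv_cont := hv.continuousOn
  have hw_cont := hw.continuousOn
  have hz : ContinuousOn (fun y => ![Qs y, 0, Ms y, 0]) [[a, b]] := by fun_prop
  have hζ : ContinuousOn (fun y => ![g y, h y, v y, w y]) [[a, b]] := by fun_prop
  have hp := memLp_vec_four hQs.memLp_deriv .zero' hMs.memLp_deriv .zero'
  have hπ := memLp_vec_four hg.memLp_deriv hh.memLp_deriv hv.memLp_deriv hw.memLp_deriv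
  simp only [← ferronematicDensity_orderReconstruction_add_smul] at hF
  have hF_contDiff : ContDiff ℝ 2 F := contDiff_ferronematicEnergy hz hp hζ hπ hF
  refine ⟨hF_contDiff.differentiable two_ne_zero, hF_contDiff.differentiable_deriv_two, ?_⟩
  rw [deriv_deriv_ferronematicEnergy_zero hz hp hζ hπ hF,
    integral_ferronematicHessian_orderReconstruction hQs_cont hMs_cont hg_cont hh_cont
      hv_cont hw_cont hg.memLp_deriv hh.memLp_deriv hv.memLp_deriv
      hw.memLp_deriv]
  simp only [ferronematicHessian_orderReconstruction_inPlane,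
    ferronematicHessian_orderReconstruction_outOfPlane]

/-- Second variation identity for the ferronematic energy about an
order-reconstruction profile `(Q*, 0, M*, 0)` in the perturbation directions
`(g, h, v, w)`. -/
theorem second_variation_identity (l c : ℝ) (Qs Ms g h v w : ℝ → ℝ)
    (hQs : ContDiffOn ℝ 1 Qs (Icc (-1) 1)) (hMs : ContDiffOn ℝ 1 Ms (Icc (-1) 1))
    (hg : ContDiffOn ℝ 1 g (Icc (-1) 1)) (hh : ContDiffOn ℝ 1 h (Icc (-1) 1))
    (hv : ContDiffOn ℝ 1 v (Icc (-1) 1)) (hw : ContDiffOn ℝ 1 w (Icc (-1) 1))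
    (F : ℝ → ℝ)
    (hF : ∀ t : ℝ, F t = ∫ y in (-1 : ℝ)..1,
      (l / 2 * ((deriv Qs y + t * deriv g y) ^ 2 + t ^ 2 * (deriv h y) ^ 2)
        + ((Qs y + t * g y) ^ 2 + t ^ 2 * (h y) ^ 2 - 1) ^ 2
        + l / 2 * ((deriv Ms y + t * deriv v y) ^ 2 + t ^ 2 * (deriv w y) ^ 2)
        + 1 / 4 * ((Ms y + t * v y) ^ 2 + t ^ 2 * (w y) ^ 2 - 1) ^ 2
        - c * (Qs y + t * g y) * ((Ms y + t * v y) ^ 2 - t ^ 2 * (w y) ^ 2)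
        - 2 * c * (t * h y) * (Ms y + t * v y) * (t * w y))) :
    (∀ t : ℝ, DifferentiableAt ℝ F t) ∧
    (∀ t : ℝ, DifferentiableAt ℝ (deriv F) t) ∧
    deriv (deriv F) 0 =
      (∫ y in (-1 : ℝ)..1,
        (l * (deriv g y) ^ 2 + l * (deriv v y) ^ 2
          + 4 * (3 * (Qs y) ^ 2 - 1) * (g y) ^ 2 + (3 * (Ms y) ^ 2 - 1) * (v y) ^ 2
          - 4 * c * g y * Ms y * v y - 2 * c * Qs y * (v y) ^ 2))
      + ∫ y in (-1 : ℝ)..1,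
        (l * (deriv h y) ^ 2 + l * (deriv w y) ^ 2
          + 4 * ((Qs y) ^ 2 - 1) * (h y) ^ 2 + ((Ms y) ^ 2 - 1) * (w y) ^ 2
          + 2 * c * Qs y * (w y) ^ 2 - 4 * c * h y * w y * Ms y) := by
  have h_le : (-1 : ℝ) ≤ 1 := by norm_num
  exact second_variation_identity_general l c Qs Ms g h v w
    (memH1_of_contDiffOn h_le hQs) (memH1_of_contDiffOn h_le hMs) (memH1_of_contDiffOn h_le hg)
    (memH1_of_contDiffOn h_le hh) (memH1_of_contDiffOn h_le hv) (memH1_of_contDiffOn h_le hw) F hF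
end

section
/- Test-map energy bound: fix c > 0, let ρ* = ρ*(c) be the unique positive root of x³ − (1+c²/2)x − c/4 and σ* = √(1 + 2cρ*). For l ∈ (0,1) define Q^t : [−1,1] → ℝ by Q^t(y) = the linear interpolation from 1 at y=−1 to ρ* at y=−1+√l, then Q^t ≡ ρ* on [−1+√l, 1−√l], then the linear interpolation from ρ* at y=1−√l to −1 at y=1; define M^t analogously with interior value σ* and the same boundary values 1 and −1. Then there exists a constant C > 0, depending only on c, such that for all l ∈ (0,1): ∫_{−1}^{1} [ (l/2)(Q^t{}'(y))² + (l/2)(M^t{}'(y))² + (Q^t(y)²−1)² + (1/4)(M^t(y)²−1)² − cQ^t(y)M^t(y)² − β(c) ] dy ≤ C√l, where β(c) = (ρ*²−1)² + (1/4)(σ*²−1)² − cρ*σ*² and the integral is computed piecewise on the three subintervals (the derivatives exist off the two interpolation break points). -/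
/-!
In the boundary layers, of width `√l`, the test maps have slope `O(1 / √l)`, so the elastic density
is `l * O(1 / √l) ^ 2 = O(1)` there. The test maps stay in a compact set that does not depend on `l`,
so the bulk density is `O(1)` as well, whatever continuous function it is. Between the layers both
maps are constant, with the values at which the bulk density was shifted to zero. Hence the shifted
energy is `O(1)` times the total width `2√l` of the layers.
-/

open Set intervalIntegral

/-- Linear interpolation from value `a` at `x0` to value `b` at `x1`. -/
noncomputable def interp (a b x0 x1 y : ℝ) : ℝ := a + (b - a) * (y - x0) / (x1 - x0)

/-- The piecewise-linear test map: equal to the linear interpolation from `1` at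
`y = −1` to the interior value `ρ` at `y = −1 + √l`, constantly `ρ` on
`[−1+√l, 1−√l]`, and the linear interpolation from `ρ` at `y = 1 − √l` to `−1`
at `y = 1`. -/
noncomputable def testMap (l ρ : ℝ) (y : ℝ) : ℝ :=
  if y < -1 + Real.sqrt l then interp 1 ρ (-1) (-1 + Real.sqrt l) y
  else if y ≤ 1 - Real.sqrt l then ρ
  else interp ρ (-1) (1 - Real.sqrt l) 1 y

open MeasureTheory Topology

section IntervalIntegral

variable {E : Type*} [NormedAddCommGroup E] {f : ℝ → E} {a b : ℝ} {K : ℝ}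

theorem intervalIntegrable_of_norm_le_const_Ioo (hf : AEStronglyMeasurable f) (hab : a ≤ b)
    (h : ∀ y ∈ Ioo a b, ‖f y‖ ≤ K) : IntervalIntegrable f volume a b := by
  rw [intervalIntegrable_iff_integrableOn_Ioo_of_le hab]
  exact Measure.integrableOn_of_bounded measure_Ioo_lt_top.ne hf
    ((ae_restrict_iff' measurableSet_Ioo).2 (.of_forall h))

variable [NormedSpace ℝ E]

theorem norm_integral_le_of_norm_le_const_Ioo (hab : a ≤ b) (h : ∀ y ∈ Ioo a b, ‖f y‖ ≤ K) :
    ‖∫ y in a..b, f y‖ ≤ K * (b - a) := by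
  rw [integral_of_le hab, integral_Ioc_eq_integral_Ioo, ← Real.volume_real_Ioo_of_le hab]
  exact norm_setIntegral_le_of_norm_le_const measure_Ioo_lt_top h

theorem intervalIntegrable_and_norm_integral_le_of_eq_zero_on_middle {d e : ℝ}
    (hf : AEStronglyMeasurable f) (hab : a ≤ b) (hbd : b ≤ d) (hde : d ≤ e)
    (hleft : ∀ y ∈ Ioo a b, ‖f y‖ ≤ K) (hmid : ∀ y ∈ Ioo b d, f y = 0)
    (hright : ∀ y ∈ Ioo d e, ‖f y‖ ≤ K) :
    IntervalIntegrable f volume a e ∧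
      ‖∫ y in a..e, f y‖ ≤ K * ((b - a) + (e - d)) := by
  have hmid' : ∀ y ∈ Ioo b d, ‖f y‖ ≤ 0 := fun y hy ↦ by simp [hmid y hy]
  have hintL := intervalIntegrable_of_norm_le_const_Ioo hf hab hleft
  have hintM := intervalIntegrable_of_norm_le_const_Ioo hf hbd hmid'
  have hintR := intervalIntegrable_of_norm_le_const_Ioo hf hde hright
  refine ⟨(hintL.trans hintM).trans hintR, ?_⟩
  rw [← integral_add_adjacent_intervals (hintL.trans hintM) hintR,
    ← integral_add_adjacent_intervals hintL hintM]
  calc ‖(∫ y in a..b, f y) + (∫ y in b..d, f y) + ∫ y in d..e, f y‖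
      ≤ ‖∫ y in a..b, f y‖ + ‖∫ y in b..d, f y‖ + ‖∫ y in d..e, f y‖ := norm_add₃_le
    _ ≤ K * (b - a) + 0 * (d - b) + K * (e - d) := by
      gcongr
      exacts [norm_integral_le_of_norm_le_const_Ioo hab hleft,
        norm_integral_le_of_norm_le_const_Ioo hbd hmid',
        norm_integral_le_of_norm_le_const_Ioo hde hright]
    _ = K * ((b - a) + (e - d)) := by ring

end IntervalIntegral

section Interp

theorem interp_eq_lineMap (a b x0 x1 y : ℝ) :
    interp a b x0 x1 y = AffineMap.lineMap a b ((y - x0) / (x1 - x0)) := by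
  rw [interp, AffineMap.lineMap_apply_ring']
  ring

theorem interp_mem_of_convex {s : Set ℝ} (hs : Convex ℝ s) {a b x0 x1 y : ℝ} (ha : a ∈ s)
    (hb : b ∈ s) (hy : y ∈ Icc x0 x1) : interp a b x0 x1 y ∈ s := by
  rw [interp_eq_lineMap]
  have hx : 0 ≤ x1 - x0 := sub_nonneg.2 (hy.1.trans hy.2)
  exact hs.lineMap_mem ha hb ⟨div_nonneg (sub_nonneg.2 hy.1) hx,
    div_le_one_of_le₀ (sub_le_sub_right hy.2 x0) hx⟩

theorem hasDerivAt_interp (a b x0 x1 y : ℝ) :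
    HasDerivAt (interp a b x0 x1) ((b - a) / (x1 - x0)) y := by
  have h := ((((hasDerivAt_id y).sub_const x0).const_mul (b - a)).div_const (x1 - x0)).const_add a
  rwa [mul_one] at h

theorem measurable_interp (a b x0 x1 : ℝ) : Measurable (interp a b x0 x1) := by
  unfold interp
  fun_prop

end Interp

section TestMap

variable {l y : ℝ}

theorem testMap_eventuallyEq_left (ρ : ℝ) (hy : y < -1 + √l) :
    testMap l ρ =ᶠ[𝓝 y] interp 1 ρ (-1) (-1 + √l) := by
  filter_upwards [Iio_mem_nhds hy] with z hz
  exact if_pos hz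

theorem testMap_eventuallyEq_middle (ρ : ℝ) (hy : y ∈ Ioo (-1 + √l) (1 - √l)) :
    testMap l ρ =ᶠ[𝓝 y] fun _ ↦ ρ := by
  filter_upwards [Ioo_mem_nhds hy.1 hy.2] with z hz
  rw [testMap, if_neg hz.1.not_gt, if_pos hz.2.le]

theorem testMap_eventuallyEq_right (hl : l ≤ 1) (ρ : ℝ) (hy : 1 - √l < y) :
    testMap l ρ =ᶠ[𝓝 y] interp ρ (-1) (1 - √l) 1 := by
  filter_upwards [Ioi_mem_nhds hy] with z hz
  have hmid : -1 + √l ≤ 1 - √l := by linarith [Real.sqrt_le_one.2 hl]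
  rw [testMap, if_neg (hmid.trans hz.le).not_gt, if_neg hz.not_ge]

theorem testMap_mem_of_convex {s : Set ℝ} (hs : Convex ℝ s) {ρ : ℝ} (h_one : 1 ∈ s) (hρ : ρ ∈ s)
    (h_neg_one : -1 ∈ s) (hy : y ∈ Icc (-1) 1) : testMap l ρ y ∈ s := by
  unfold testMap
  split_ifs with hleft hmid
  · exact interp_mem_of_convex hs h_one hρ ⟨hy.1, hleft.le⟩
  · exact hρ
  · exact interp_mem_of_convex hs hρ h_neg_one ⟨(not_le.1 hmid).le, hy.2⟩

theorem abs_deriv_testMap_le (hl : l ≤ 1) (ρ : ℝ) (hleft : y ≠ -1 + √l) (hright : y ≠ 1 - √l) :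
    |deriv (testMap l ρ) y| ≤ (1 + |ρ|) / √l := by
  rcases hleft.lt_or_gt with hy | hy
  · rw [(testMap_eventuallyEq_left ρ hy).deriv_eq, (hasDerivAt_interp ..).deriv, abs_div,
      show -1 + √l - -1 = √l by ring, abs_of_nonneg (Real.sqrt_nonneg l)]
    gcongr
    simpa [add_comm] using abs_sub ρ 1
  rcases hright.lt_or_gt with hy' | hy'
  · rw [(testMap_eventuallyEq_middle ρ ⟨hy, hy'⟩).deriv_eq, deriv_const, abs_zero]
    positivity
  · rw [(testMap_eventuallyEq_right hl ρ hy').deriv_eq, (hasDerivAt_interp ..).deriv, abs_div,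
      sub_sub_cancel, abs_of_nonneg (Real.sqrt_nonneg l)]
    gcongr
    simpa using abs_sub (-1) ρ

theorem measurable_testMap (l ρ : ℝ) : Measurable (testMap l ρ) :=
  .ite measurableSet_Iio (measurable_interp ..)
    (.ite measurableSet_Iic measurable_const (measurable_interp ..))

end TestMap

section EnergyDensity

/-- The density of the one-dimensional energy of the pair of profiles `(Q, M)`: the elastic part
with elastic constant `l`, plus the bulk density `f`. -/
noncomputable def energyDensity (f : ℝ → ℝ → ℝ) (l : ℝ) (Q M : ℝ → ℝ) (y : ℝ) : ℝ :=
  l / 2 * deriv Q y ^ 2 + l / 2 * deriv M y ^ 2 + f (Q y) (M y)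

/-- The bulk density `f^{OR}` of the order-reconstruction problem, with coupling constant `c`. -/
noncomputable def orBulkDensity (c Q M : ℝ) : ℝ :=
  (Q ^ 2 - 1) ^ 2 + 1 / 4 * (M ^ 2 - 1) ^ 2 - c * Q * M ^ 2

variable {f : ℝ → ℝ → ℝ} {l y : ℝ} {Q M : ℝ → ℝ}

theorem measurable_energyDensity (hf : Measurable f.uncurry) (hQ : Measurable Q)
    (hM : Measurable M) (l : ℝ) : Measurable (energyDensity f l Q M) :=
  ((((measurable_deriv Q).pow_const 2).const_mul _).add
    (((measurable_deriv M).pow_const 2).const_mul _)).add (hf.comp (hQ.prodMk hM))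

theorem energyDensity_eq_of_eventuallyEq_const {q m : ℝ} (hQ : Q =ᶠ[𝓝 y] fun _ ↦ q)
    (hM : M =ᶠ[𝓝 y] fun _ ↦ m) : energyDensity f l Q M y = f q m := by
  simp [energyDensity, hQ.deriv_eq, hM.deriv_eq, hQ.eq_of_nhds, hM.eq_of_nhds]

theorem mul_sq_le_sq_of_abs_le_div_sqrt {p A : ℝ} (hl : 0 < l) (hp : |p| ≤ A / √l) :
    l * p ^ 2 ≤ A ^ 2 :=
  calc l * p ^ 2 ≤ l * (A / √l) ^ 2 := by rw [← sq_abs p]; gcongr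
    _ = A ^ 2 := by rw [div_pow, Real.sq_sqrt hl.le, mul_div_cancel₀ _ hl.ne']

theorem abs_energyDensity_sub_le {A B D β : ℝ} (hl : 0 < l) (hQ : |deriv Q y| ≤ A / √l)
    (hM : |deriv M y| ≤ B / √l) (hf : |f (Q y) (M y) - β| ≤ D) :
    |energyDensity f l Q M y - β| ≤ (A ^ 2 + B ^ 2) / 2 + D := by
  have helastic : |l / 2 * deriv Q y ^ 2 + l / 2 * deriv M y ^ 2| ≤ (A ^ 2 + B ^ 2) / 2 := by
    rw [abs_of_nonneg (by positivity)]
    linarith [mul_sq_le_sq_of_abs_le_div_sqrt hl hQ, mul_sq_le_sq_of_abs_le_div_sqrt hl hM]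
  rw [energyDensity, add_sub_assoc]
  exact (abs_add_le _ _).trans (add_le_add helastic hf)

theorem exists_abs_comp_testMap_sub_le (hf : Continuous f.uncurry) (ρ σ : ℝ) :
    ∃ D, 0 ≤ D ∧ ∀ l, ∀ y ∈ Icc (-1 : ℝ) 1,
      |f (testMap l ρ y) (testMap l σ y) - f ρ σ| ≤ D := by
  let box := Metric.closedBall (0 : ℝ) (1 + |ρ|) ×ˢ Metric.closedBall (0 : ℝ) (1 + |σ|)
  have hbox : IsCompact box := (isCompact_closedBall _ _).prod (isCompact_closedBall _ _)
  obtain ⟨D, hD⟩ := hbox.exists_bound_of_continuousOn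
    (f := fun p ↦ f.uncurry p - f ρ σ) (by fun_prop)
  have hmem (l τ y : ℝ) (hy : y ∈ Icc (-1) 1) :
      testMap l τ y ∈ Metric.closedBall (0 : ℝ) (1 + |τ|) :=
    testMap_mem_of_convex (convex_closedBall _ _) (by simp) (by simp) (by simp) hy
  exact ⟨D, (norm_nonneg _).trans (hD (ρ, σ) (by simp [box])),
    fun l y hy ↦ hD _ (mk_mem_prod (hmem l ρ y hy) (hmem l σ y hy))⟩

theorem exists_abs_energyDensity_testMap_sub_le (hf : Continuous f.uncurry) (ρ σ : ℝ) :
    ∃ K, 0 < K ∧ ∀ l ∈ Ioc (0 : ℝ) 1, ∀ y ∈ Icc (-1 : ℝ) 1, y ≠ -1 + √l → y ≠ 1 - √l →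
      |energyDensity f l (testMap l ρ) (testMap l σ) y - f ρ σ| ≤ K := by
  obtain ⟨D, hD0, hD⟩ := exists_abs_comp_testMap_sub_le hf ρ σ
  exact ⟨((1 + |ρ|) ^ 2 + (1 + |σ|) ^ 2) / 2 + D, by positivity, fun l hl y hy hleft hright ↦
    abs_energyDensity_sub_le hl.1 (abs_deriv_testMap_le hl.2 ρ hleft hright)
      (abs_deriv_testMap_le hl.2 σ hleft hright) (hD l y hy)⟩

end EnergyDensity

theorem test_map_energy_bound_general {f : ℝ → ℝ → ℝ} (hf : Continuous f.uncurry) (ρ σ : ℝ) :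
    ∃ C : ℝ, 0 < C ∧ ∀ l ∈ Ioc (0 : ℝ) 1,
      IntervalIntegrable (fun y ↦ energyDensity f l (testMap l ρ) (testMap l σ) y - f ρ σ)
        volume (-1) 1 ∧
      |∫ y in (-1 : ℝ)..1, (energyDensity f l (testMap l ρ) (testMap l σ) y - f ρ σ)|
        ≤ C * √l := by
  obtain ⟨K, hK0, hK⟩ := exists_abs_energyDensity_testMap_sub_le hf ρ σ
  refine ⟨2 * K, by positivity, fun l hl ↦ ?_⟩
  have hs0 : 0 ≤ √l := Real.sqrt_nonneg l
  have hs1 : √l ≤ 1 := Real.sqrt_le_one.2 hl.2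
  have hmeas := (measurable_energyDensity hf.measurable (measurable_testMap l ρ)
    (measurable_testMap l σ) l).sub_const (f ρ σ)
  have hmid (y : ℝ) (hy : y ∈ Ioo (-1 + √l) (1 - √l)) :
      energyDensity f l (testMap l ρ) (testMap l σ) y - f ρ σ = 0 :=
    sub_eq_zero.2 <| energyDensity_eq_of_eventuallyEq_const (testMap_eventuallyEq_middle ρ hy)
      (testMap_eventuallyEq_middle σ hy)
  obtain ⟨hint, hle⟩ := intervalIntegrable_and_norm_integral_le_of_eq_zero_on_middle
    hmeas.aestronglyMeasurable (by linarith) (by linarith) (by linarith)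
    (fun y hy ↦ hK l hl y ⟨hy.1.le, by linarith [hy.2]⟩ hy.2.ne (by linarith [hy.2]))
    hmid
    (fun y hy ↦ hK l hl y ⟨by linarith [hy.1], hy.2.le⟩ (by linarith [hy.1]) hy.1.ne')
  exact ⟨hint, hle.trans_eq (by ring)⟩

/-- Test-map energy bound: the shifted OR energy of the piecewise-linear
competitors `(Q^t, M^t)` with interior values `ρ*` and `σ* = √(1 + 2cρ*)` is at
most `C√l` for small `l`, where `β(c)` is the minimum value of the OR bulk
density. -/
theorem test_map_energy_bound (c ρStar : ℝ) (hc : 0 < c) (hρpos : 0 < ρStar)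
    (hρroot : ρStar ^ 3 - (1 + c ^ 2 / 2) * ρStar - c / 4 = 0)
    (hρuniq : ∀ ρ : ℝ, 0 < ρ → ρ ^ 3 - (1 + c ^ 2 / 2) * ρ - c / 4 = 0 → ρ = ρStar) :
    ∃ C : ℝ, 0 < C ∧ ∀ l ∈ Ioo (0 : ℝ) 1,
      (∫ y in (-1 : ℝ)..1,
        (l / 2 * (deriv (testMap l ρStar) y) ^ 2
          + l / 2 * (deriv (testMap l (Real.sqrt (1 + 2 * c * ρStar))) y) ^ 2
          + ((testMap l ρStar y) ^ 2 - 1) ^ 2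
          + 1 / 4 * ((testMap l (Real.sqrt (1 + 2 * c * ρStar)) y) ^ 2 - 1) ^ 2
          - c * testMap l ρStar y * (testMap l (Real.sqrt (1 + 2 * c * ρStar)) y) ^ 2
          - ((ρStar ^ 2 - 1) ^ 2
              + 1 / 4 * ((Real.sqrt (1 + 2 * c * ρStar)) ^ 2 - 1) ^ 2
              - c * ρStar * (Real.sqrt (1 + 2 * c * ρStar)) ^ 2)))
        ≤ C * Real.sqrt l := by
  have hf : Continuous (orBulkDensity c).uncurry := by unfold orBulkDensity; fun_prop
  obtain ⟨C, hC, h⟩ := test_map_energy_bound_general hf ρStar √(1 + 2 * c * ρStar)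
  simp only [energyDensity, orBulkDensity, ← add_assoc, ← add_sub_assoc] at h
  exact ⟨C, hC, fun l hl ↦ (le_abs_self _).trans (h l ⟨hl.1, hl.2.le⟩).2⟩
end

section
/- Strict midpoint convexity on the maximum-principle region: for every c > 0 there exists l*(c) > 0 such that for all l > l*(c) the following holds. Let (Q₁₁,Q₁₂,M₁,M₂) and (Q̄₁₁,Q̄₁₂,M̄₁,M̄₂) be two quadruples of functions continuously differentiable on [−1,1], both satisfying the boundary conditions Q₁₁(−1)=M₁(−1)=1, Q₁₁(1)=M₁(1)=−1, Q₁₂(±1)=M₂(±1)=0 (and likewise for the barred quadruple), both satisfying the pointwise bounds Q₁₁² + Q₁₂² ≤ ρ*(c)² and M₁² + M₂² ≤ 1 + 2cρ*(c) on [−1,1], and not identically equal. Then F evaluated at the pointwise midpoint quadruple ((Q₁₁+Q̄₁₁)/2, (Q₁₂+Q̄₁₂)/2, (M₁+M̄₁)/2, (M₂+M̄₂)/2) is strictly less than (F(Q₁₁,Q₁₂,M₁,M₂) + F(Q̄₁₁,Q̄₁₂,M̄₁,M̄₂))/2. -/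
open Set intervalIntegral

/-- The ferronematic energy on `[−1,1]` with elastic constant `l`, coupling
parameter `c` and `ξ = 1`. -/
noncomputable def ferroEnergy (l c : ℝ) (Q11 Q12 M1 M2 : ℝ → ℝ) : ℝ :=
  ∫ y in (-1 : ℝ)..1,
    (l / 2 * ((deriv Q11 y) ^ 2 + (deriv Q12 y) ^ 2)
      + ((Q11 y) ^ 2 + (Q12 y) ^ 2 - 1) ^ 2
      + l / 2 * ((deriv M1 y) ^ 2 + (deriv M2 y) ^ 2)
      + 1 / 4 * ((M1 y) ^ 2 + (M2 y) ^ 2 - 1) ^ 2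
      - c * Q11 y * ((M1 y) ^ 2 - (M2 y) ^ 2)
      - 2 * c * Q12 y * M1 y * M2 y)


/-!
On a ball of radius `R`, the convexity inequality with weights `s` and `t` for the bulk potential
fails by at most `s t κ/2 ‖z - w‖²`: the two wells contribute `4` to `κ`, and the coupling, a cubic
form whose Hessian is linear in the base point, contributes `4 |c| R`. The Dirichlet energy is
quadratic, with convexity gap `s t l/2 ∫ ‖u' - v'‖²`. Since `u - v` vanishes at the left endpoint,
Poincaré's inequality lets this gap absorb the defect `s t κ/2 ∫ ‖u - v‖²` once `l` is large
compared with `κ`.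
-/

open Metric
open scoped ComplexConjugate

section ElasticEnergy

variable {E : Type*} [NormedAddCommGroup E] [InnerProductSpace ℝ E] {a b : ℝ}

lemma strongConvexOn_norm_sq : StrongConvexOn univ 2 fun x : E => ‖x‖ ^ 2 :=
  strongConvexOn_iff_convex.2 (by simpa using convexOn_const 0 convex_univ)

lemma integral_norm_sq_add_inner_derivWithin_eq_zero {w : ℝ → E} (hab : a < b)
    (hw : ContDiffOn ℝ 1 w (Icc a b)) (ha : w a = 0) :
    ∫ y in a..b, (‖w y‖ ^ 2 + (y - b) * (2 * inner ℝ (w y) (derivWithin w (Icc a b) y))) = 0 := by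
  have hw₀ := hw.continuousOn
  have hw₁ := hw.continuousOn_derivWithin (uniqueDiffOn_Icc hab) le_rfl
  rw [integral_eq_sub_of_hasDerivAt_of_le (f := fun y => (y - b) * ‖w y‖ ^ 2) hab.le
    (by fun_prop) (fun y hy => ?_) (ContinuousOn.intervalIntegrable_of_Icc hab.le (by fun_prop))]
  · simp [ha]
  · have hderiv : HasDerivAt w (derivWithin w (Icc a b) y) y :=
      (hw.differentiableOn one_ne_zero y (Ioo_subset_Icc_self hy)).hasDerivWithinAt.hasDerivAt
        (Icc_mem_nhds hy.1 hy.2)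
    exact (((hasDerivAt_id' y).sub_const b).mul hderiv.norm_sq).congr_deriv (by simp)

lemma integral_norm_sq_le_integral_norm_derivWithin_sq {w : ℝ → E} (hab : a < b)
    (hw : ContDiffOn ℝ 1 w (Icc a b)) (ha : w a = 0) :
    ∫ y in a..b, ‖w y‖ ^ 2 ≤
      4 * (b - a) ^ 2 * ∫ y in a..b, ‖derivWithin w (Icc a b) y‖ ^ 2 := by
  set w' := derivWithin w (Icc a b)
  have hw₀ := hw.continuousOn
  have hw₁ : ContinuousOn w' (Icc a b) :=
    hw.continuousOn_derivWithin (uniqueDiffOn_Icc hab) le_rfl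
  have hint {f : ℝ → ℝ} (hf : ContinuousOn f (Icc a b)) :
      IntervalIntegrable f MeasureTheory.volume a b :=
    hf.intervalIntegrable_of_Icc hab.le
  -- The square of `w + 2 (y - b) w'` is nonnegative.
  have hpointwise (y : ℝ) (hy : y ∈ Icc a b) : ‖w y‖ ^ 2 ≤ 4 * (b - a) ^ 2 * ‖w' y‖ ^ 2
      + 2 * (‖w y‖ ^ 2 + (y - b) * (2 * inner ℝ (w y) (w' y))) := by
    have hsq := norm_add_sq_real (w y) ((2 * (y - b)) • w' y)
    rw [real_inner_smul_right, norm_smul, mul_pow, Real.norm_eq_abs, sq_abs] at hsq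
    have hy_sq : (y - b) ^ 2 ≤ (b - a) ^ 2 := by nlinarith [hy.1, hy.2]
    nlinarith [sq_nonneg ‖w y + (2 * (y - b)) • w' y‖,
      mul_le_mul_of_nonneg_right hy_sq (sq_nonneg ‖w' y‖)]
  calc ∫ y in a..b, ‖w y‖ ^ 2
      ≤ ∫ y in a..b, (4 * (b - a) ^ 2 * ‖w' y‖ ^ 2
          + 2 * (‖w y‖ ^ 2 + (y - b) * (2 * inner ℝ (w y) (w' y)))) :=
        integral_mono_on hab.le (hint (by fun_prop)) (hint (by fun_prop)) hpointwise
    _ = 4 * (b - a) ^ 2 * ∫ y in a..b, ‖w' y‖ ^ 2 := by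
        rw [integral_add (hint (by fun_prop)) (hint (by fun_prop)), integral_const_mul,
          integral_const_mul, integral_norm_sq_add_inner_derivWithin_eq_zero hab hw ha]
        simp

lemma integral_norm_derivWithin_sq_sub_norm_sq_pos {w : ℝ → E} {κ l : ℝ} (hab : a < b)
    (hl : 0 ≤ l) (hκl : 4 * (b - a) ^ 2 * κ < l) (hw : ContDiffOn ℝ 1 w (Icc a b))
    (ha : w a = 0) (hne : ∃ y ∈ Icc a b, w y ≠ 0) :
    0 < ∫ y in a..b, (l * ‖derivWithin w (Icc a b) y‖ ^ 2 - κ * ‖w y‖ ^ 2) := by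
  have hw₀ := hw.continuousOn
  have hw₁ := hw.continuousOn_derivWithin (uniqueDiffOn_Icc hab) le_rfl
  have hpoincare := integral_norm_sq_le_integral_norm_derivWithin_sq hab hw ha
  have hpos : 0 < ∫ y in a..b, ‖w y‖ ^ 2 := by
    obtain ⟨y, hy, hwy⟩ := hne
    exact integral_pos hab (by fun_prop) (fun _ _ => by positivity) ⟨y, hy, by positivity⟩
  have hba : 0 < 4 * (b - a) ^ 2 := by have := sub_pos.2 hab; positivity
  rw [integral_sub (ContinuousOn.intervalIntegrable_of_Icc hab.le (by fun_prop))
      (ContinuousOn.intervalIntegrable_of_Icc hab.le (by fun_prop)),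
    integral_const_mul, integral_const_mul]
  refine sub_pos.2 (lt_of_mul_lt_mul_left ?_ hba.le)
  calc 4 * (b - a) ^ 2 * (κ * ∫ y in a..b, ‖w y‖ ^ 2)
      = 4 * (b - a) ^ 2 * κ * ∫ y in a..b, ‖w y‖ ^ 2 := by ring
    _ < l * ∫ y in a..b, ‖w y‖ ^ 2 := by gcongr
    _ ≤ l * (4 * (b - a) ^ 2 * ∫ y in a..b, ‖derivWithin w (Icc a b) y‖ ^ 2) := by gcongr
    _ = 4 * (b - a) ^ 2 * (l * ∫ y in a..b, ‖derivWithin w (Icc a b) y‖ ^ 2) := by ring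

/-- The one-constant elastic energy of a field `u` on `[a, b]` with potential `V`. The one-sided
derivative is used at the endpoints, so that the integrand is continuous on `[a, b]`. -/
noncomputable def elasticEnergy (l : ℝ) (V : E → ℝ) (a b : ℝ) (u : ℝ → E) : ℝ :=
  ∫ y in a..b, (l / 2 * ‖derivWithin u (Icc a b) y‖ ^ 2 + V (u y))

lemma elasticEnergy_integrand_combo_le {l κ s t : ℝ} {V : E → ℝ} {K : Set E} {x y x' y' : E}
    (hl : 0 ≤ l) (hVconv : StrongConvexOn K (-κ) V) (hx : x ∈ K) (hy : y ∈ K)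
    (hs : 0 ≤ s) (ht : 0 ≤ t) (hst : s + t = 1) :
    l / 2 * ‖s • x' + t • y'‖ ^ 2 + V (s • x + t • y) ≤
      s * (l / 2 * ‖x'‖ ^ 2 + V x) + t * (l / 2 * ‖y'‖ ^ 2 + V y)
        - s * t / 2 * (l * ‖x' - y'‖ ^ 2 - κ * ‖x - y‖ ^ 2) := by
  have hkinetic := mul_le_mul_of_nonneg_left
    (strongConvexOn_norm_sq.2 (mem_univ x') (mem_univ y') hs ht hst) (show 0 ≤ l / 2 by positivity)
  have hpotential := hVconv.2 hx hy hs ht hst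
  simp only [smul_eq_mul] at hkinetic hpotential
  linarith

lemma intervalIntegrable_elasticEnergy_integrand (l : ℝ) {V : E → ℝ} {K : Set E} {u : ℝ → E}
    (hab : a < b) (hV : ContinuousOn V K) (hu : ContDiffOn ℝ 1 u (Icc a b))
    (huK : MapsTo u (Icc a b) K) :
    IntervalIntegrable (fun y => l / 2 * ‖derivWithin u (Icc a b) y‖ ^ 2 + V (u y))
      MeasureTheory.volume a b := by
  have hu₁ := hu.continuousOn_derivWithin (uniqueDiffOn_Icc hab) le_rfl
  exact ((hu₁.norm.pow 2).const_mul _ |>.add (hV.comp hu.continuousOn huK))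
    |>.intervalIntegrable_of_Icc hab.le

lemma elasticEnergy_combo_le {l κ s t : ℝ} {V : E → ℝ} {K : Set E} {u v : ℝ → E} (hab : a < b)
    (hl : 0 ≤ l) (hV : ContinuousOn V K) (hVconv : StrongConvexOn K (-κ) V)
    (hu : ContDiffOn ℝ 1 u (Icc a b)) (hv : ContDiffOn ℝ 1 v (Icc a b))
    (huK : MapsTo u (Icc a b) K) (hvK : MapsTo v (Icc a b) K)
    (hs : 0 ≤ s) (ht : 0 ≤ t) (hst : s + t = 1) :
    elasticEnergy l V a b (s • u + t • v) ≤
      s * elasticEnergy l V a b u + t * elasticEnergy l V a b v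
        - s * t / 2 * ∫ y in a..b,
            (l * ‖derivWithin (u - v) (Icc a b) y‖ ^ 2 - κ * ‖(u - v) y‖ ^ 2) := by
  have hcombo : ContDiffOn ℝ 1 (s • u + t • v) (Icc a b) :=
    (hu.const_smul s).add (hv.const_smul t)
  have hcomboK : MapsTo (s • u + t • v) (Icc a b) K :=
    fun y hy => hVconv.1 (huK hy) (hvK hy) hs ht hst
  have hintu := (intervalIntegrable_elasticEnergy_integrand l hab hV hu huK).const_mul s
  have hintv := (intervalIntegrable_elasticEnergy_integrand l hab hV hv hvK).const_mul t
  have hintw : IntervalIntegrable (fun y => s * t / 2 *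
      (l * ‖derivWithin (u - v) (Icc a b) y‖ ^ 2 - κ * ‖(u - v) y‖ ^ 2))
      MeasureTheory.volume a b := by
    have hw₀ : ContinuousOn (fun y => (u - v) y) (Icc a b) := (hu.sub hv).continuousOn
    have hw₁ := (hu.sub hv).continuousOn_derivWithin (uniqueDiffOn_Icc hab) le_rfl
    exact ContinuousOn.intervalIntegrable_of_Icc hab.le (by fun_prop)
  unfold elasticEnergy
  rw [← integral_const_mul, ← integral_const_mul, ← integral_const_mul,
    ← integral_add hintu hintv, ← integral_sub (hintu.add hintv) hintw]
  refine integral_mono_on hab.le (intervalIntegrable_elasticEnergy_integrand l hab hV hcombo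
    hcomboK) ((hintu.add hintv).sub hintw) fun y hy => ?_
  have huy := hu.differentiableOn one_ne_zero y hy
  have hvy := hv.differentiableOn one_ne_zero y hy
  rw [derivWithin_add (huy.const_smul s) (hvy.const_smul t), derivWithin_const_smul _ huy,
    derivWithin_const_smul _ hvy, derivWithin_sub huy hvy]
  exact elasticEnergy_integrand_combo_le hl hVconv (huK hy) (hvK hy) hs ht hst

theorem elasticEnergy_combo_lt {l κ s t : ℝ} {V : E → ℝ} {K : Set E} {u v : ℝ → E} (hab : a < b)
    (hl : 0 ≤ l) (hκl : 4 * (b - a) ^ 2 * κ < l)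
    (hV : ContinuousOn V K) (hVconv : StrongConvexOn K (-κ) V)
    (hu : ContDiffOn ℝ 1 u (Icc a b)) (hv : ContDiffOn ℝ 1 v (Icc a b))
    (huK : MapsTo u (Icc a b) K) (hvK : MapsTo v (Icc a b) K)
    (ha : u a = v a) (hne : ¬ EqOn u v (Icc a b)) (hs : 0 < s) (ht : 0 < t) (hst : s + t = 1) :
    elasticEnergy l V a b (s • u + t • v) <
      s * elasticEnergy l V a b u + t * elasticEnergy l V a b v := by
  have hle := elasticEnergy_combo_le hab hl hV hVconv hu hv huK hvK hs.le ht.le hst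
  have hgap : ∃ y ∈ Icc a b, (u - v) y ≠ 0 := by
    simpa [EqOn, sub_eq_zero, and_assoc] using hne
  have hpos := integral_norm_derivWithin_sq_sub_norm_sq_pos hab hl hκl (hu.sub hv)
    (by simp [ha]) hgap
  exact hle.trans_lt (sub_lt_self _ (by positivity))

end ElasticEnergy

/-- The target space of a ferronematic field: a pair of complex numbers, the nematic order
parameter `Q₁₁ + i Q₁₂` and the magnetization `M₁ + i M₂`, with the Euclidean norm. -/
abbrev FerroState : Type := WithLp 2 (ℂ × ℂ)

/-- The nemato-magnetic coupling `Q₁₁ (M₁² - M₂²) + 2 Q₁₂ M₁ M₂ = Re (Q̄ M²)`. -/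
def ferroCoupling (z : FerroState) : ℝ := (conj z.fst * z.snd ^ 2).re

/-- Half the second derivative of `ferroCoupling` at `p` in the direction `d`. -/
def ferroCouplingHalfHess (p d : FerroState) : ℝ :=
  (conj p.fst * d.snd ^ 2 + 2 * (conj d.fst * p.snd * d.snd)).re

/-- The bulk potential of the ferronematic energy with coupling parameter `c`. -/
noncomputable def ferroPotential (c : ℝ) (z : FerroState) : ℝ :=
  (‖z.fst‖ ^ 2 - 1) ^ 2 + 1 / 4 * (‖z.snd‖ ^ 2 - 1) ^ 2 - c * ferroCoupling z

lemma abs_ferroCouplingHalfHess_le (p d : FerroState) :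
    |ferroCouplingHalfHess p d| ≤ 2 * ‖p‖ * ‖d‖ ^ 2 := by
  have hp₁ : ‖p.fst‖ ≤ ‖p‖ := WithLp.norm_fst_le ..
  have hp₂ : ‖p.snd‖ ≤ ‖p‖ := WithLp.norm_snd_le ..
  calc |ferroCouplingHalfHess p d|
      ≤ ‖conj p.fst * d.snd ^ 2 + 2 * (conj d.fst * p.snd * d.snd)‖ := Complex.abs_re_le_norm _
    _ ≤ ‖conj p.fst * d.snd ^ 2‖ + ‖2 * (conj d.fst * p.snd * d.snd)‖ := norm_add_le _ _
    _ = ‖p.fst‖ * ‖d.snd‖ ^ 2 + 2 * (‖d.fst‖ * ‖p.snd‖ * ‖d.snd‖) := by simp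
    _ ≤ ‖p‖ * ‖d.snd‖ ^ 2 + 2 * (‖d.fst‖ * ‖p‖ * ‖d.snd‖) := by gcongr
    _ = ‖p‖ * (‖d.snd‖ ^ 2 + 2 * ‖d.fst‖ * ‖d.snd‖) := by ring
    _ ≤ ‖p‖ * (2 * ‖d‖ ^ 2) := by
        gcongr
        rw [WithLp.prod_norm_sq_eq_of_L2]
        nlinarith [sq_nonneg (‖d.fst‖ - ‖d.snd‖)]
    _ = 2 * ‖p‖ * ‖d‖ ^ 2 := by ring

/-- For a cubic form the convexity gap is an exact value of the Hessian, at a point which is again a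
convex combination of `z` and `w`. -/
lemma ferroCoupling_convexity_gap (z w : FerroState) {s t : ℝ} (hst : s + t = 1) :
    s * ferroCoupling z + t * ferroCoupling w - ferroCoupling (s • z + t • w) =
      s * t * ferroCouplingHalfHess (((2 * s + t) / 3) • z + ((s + 2 * t) / 3) • w) (z - w) := by
  obtain rfl : t = 1 - s := by linarith
  simp only [ferroCoupling, ferroCouplingHalfHess, pow_two, WithLp.add_fst, WithLp.add_snd,
    WithLp.sub_fst, WithLp.sub_snd, WithLp.smul_fst, WithLp.smul_snd, map_add, map_sub,
    Complex.add_re, Complex.add_im, Complex.sub_re, Complex.sub_im, Complex.mul_re, Complex.mul_im,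
    Complex.smul_re, Complex.smul_im, Complex.conj_re, Complex.conj_im, Complex.re_ofNat,
    Complex.im_ofNat, smul_eq_mul]
  ring

lemma strongConvexOn_const_mul_ferroCoupling (k R : ℝ) :
    StrongConvexOn (closedBall 0 R) (-(4 * |k| * R)) fun z => k * ferroCoupling z := by
  refine ⟨convex_closedBall 0 R, fun z hz w hw s t hs ht hst => ?_⟩
  have hp : ((2 * s + t) / 3) • z + ((s + 2 * t) / 3) • w ∈ closedBall (0 : FerroState) R :=
    convex_closedBall 0 R hz hw (by positivity) (by positivity) (by linarith)
  set p := ((2 * s + t) / 3) • z + ((s + 2 * t) / 3) • w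
  have hgap := ferroCoupling_convexity_gap z w hst
  have hhess : -(2 * |k| * R * ‖z - w‖ ^ 2) ≤ k * ferroCouplingHalfHess p (z - w) := by
    refine neg_le_of_abs_le ?_
    calc |k * ferroCouplingHalfHess p (z - w)|
        = |k| * |ferroCouplingHalfHess p (z - w)| := abs_mul _ _
      _ ≤ |k| * (2 * ‖p‖ * ‖z - w‖ ^ 2) := by gcongr; exact abs_ferroCouplingHalfHess_le _ _
      _ ≤ |k| * (2 * R * ‖z - w‖ ^ 2) := by gcongr; exact mem_closedBall_zero_iff.1 hp
      _ = 2 * |k| * R * ‖z - w‖ ^ 2 := by ring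
  have := mul_le_mul_of_nonneg_left hhess (mul_nonneg hs ht)
  simp only [smul_eq_mul]
  linear_combination this - k * hgap

lemma strongConvexOn_ferroPotential_zero : StrongConvexOn univ (-4) (ferroPotential 0) := by
  have hfst : ConvexOn ℝ univ fun z : FerroState => ‖z.fst‖ :=
    (convexOn_norm convex_univ).comp_linearMap (WithLp.fstₗ 2 ℝ ℂ ℂ)
  have hsnd : ConvexOn ℝ univ fun z : FerroState => ‖z.snd‖ :=
    (convexOn_norm convex_univ).comp_linearMap (WithLp.sndₗ 2 ℝ ℂ ℂ)
  have hsum := (((hfst.pow (fun _ _ => norm_nonneg _) 4).add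
    ((hsnd.pow (fun _ _ => norm_nonneg _) 4).smul (c := 1 / 4) (by norm_num))).add
    ((hsnd.pow (fun _ _ => norm_nonneg _) 2).smul (c := 3 / 2) (by norm_num))).add
    (convexOn_const (5 / 4) convex_univ)
  refine strongConvexOn_iff_convex.2 (hsum.congr fun z _ => ?_)
  simp only [ferroPotential, WithLp.prod_norm_sq_eq_of_L2, Pi.add_apply, Pi.pow_apply, smul_eq_mul]
  ring

lemma strongConvexOn_ferroPotential (c R : ℝ) :
    StrongConvexOn (closedBall 0 R) (-(4 * (1 + |c| * R))) (ferroPotential c) := by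
  have hwells : StrongConvexOn (closedBall 0 R) (-4) (ferroPotential 0) :=
    ⟨convex_closedBall 0 R, fun z _ w _ => strongConvexOn_ferroPotential_zero.2 trivial trivial⟩
  have hsum := UniformConvexOn.add hwells (strongConvexOn_const_mul_ferroCoupling (-c) R)
  rw [StrongConvexOn]
  convert hsum using 1
  · ext r
    simp only [abs_neg, Pi.add_apply]
    ring
  · ext z
    simp only [ferroPotential, Pi.add_apply]
    ring

lemma continuous_ferroPotential (c : ℝ) : Continuous (ferroPotential c) := by
  unfold ferroPotential ferroCoupling
  fun_prop

/-- The field with nematic components `Q₁, Q₂` and magnetic components `M₁, M₂`. -/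
def ferroField (Q₁ Q₂ M₁ M₂ : ℝ → ℝ) (y : ℝ) : FerroState :=
  WithLp.toLp 2 (⟨Q₁ y, Q₂ y⟩, ⟨M₁ y, M₂ y⟩)

lemma ferroField_combo (Q₁ Q₂ M₁ M₂ R₁ R₂ N₁ N₂ : ℝ → ℝ) (s t : ℝ) :
    s • ferroField Q₁ Q₂ M₁ M₂ + t • ferroField R₁ R₂ N₁ N₂ =
      ferroField (fun y => s * Q₁ y + t * R₁ y) (fun y => s * Q₂ y + t * R₂ y)
        (fun y => s * M₁ y + t * N₁ y) (fun y => s * M₂ y + t * N₂ y) :=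
  funext fun y => WithLp.ofLp_injective 2 <| by
    refine Prod.ext (Complex.ext ?_ ?_) (Complex.ext ?_ ?_) <;> simp [ferroField]

lemma ferroField_eq_iff {Q₁ Q₂ M₁ M₂ R₁ R₂ N₁ N₂ : ℝ → ℝ} {y : ℝ} :
    ferroField Q₁ Q₂ M₁ M₂ y = ferroField R₁ R₂ N₁ N₂ y ↔
      Q₁ y = R₁ y ∧ Q₂ y = R₂ y ∧ M₁ y = N₁ y ∧ M₂ y = N₂ y := by
  simp [ferroField, Complex.ext_iff, and_assoc]

section FerroField

variable {Q₁ Q₂ M₁ M₂ : ℝ → ℝ}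

lemma norm_ferroField_sq (y : ℝ) :
    ‖ferroField Q₁ Q₂ M₁ M₂ y‖ ^ 2 = Q₁ y ^ 2 + Q₂ y ^ 2 + (M₁ y ^ 2 + M₂ y ^ 2) := by
  simp [WithLp.prod_norm_sq_eq_of_L2, ferroField, Complex.sq_norm, Complex.normSq_mk, ← pow_two]

lemma ferroPotential_ferroField (c y : ℝ) :
    ferroPotential c (ferroField Q₁ Q₂ M₁ M₂ y) =
      (Q₁ y ^ 2 + Q₂ y ^ 2 - 1) ^ 2 + 1 / 4 * (M₁ y ^ 2 + M₂ y ^ 2 - 1) ^ 2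
        - c * Q₁ y * (M₁ y ^ 2 - M₂ y ^ 2) - 2 * c * Q₂ y * M₁ y * M₂ y := by
  simp only [ferroPotential, ferroCoupling, ferroField, WithLp.toLp_fst, WithLp.toLp_snd,
    Complex.sq_norm, Complex.normSq_mk, pow_two (_ : ℂ), Complex.mul_re, Complex.mul_im,
    Complex.conj_re, Complex.conj_im]
  ring

lemma contDiffOn_ferroField {n : WithTop ℕ∞} {S : Set ℝ} (hQ₁ : ContDiffOn ℝ n Q₁ S)
    (hQ₂ : ContDiffOn ℝ n Q₂ S) (hM₁ : ContDiffOn ℝ n M₁ S) (hM₂ : ContDiffOn ℝ n M₂ S) :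
    ContDiffOn ℝ n (ferroField Q₁ Q₂ M₁ M₂) S :=
  WithLp.contDiff_toLp.comp_contDiffOn <|
    (Complex.equivRealProdCLM.symm.contDiff.comp_contDiffOn (hQ₁.prodMk hQ₂)).prodMk
      (Complex.equivRealProdCLM.symm.contDiff.comp_contDiffOn (hM₁.prodMk hM₂))

lemma deriv_ferroField {y : ℝ} (hQ₁ : DifferentiableAt ℝ Q₁ y) (hQ₂ : DifferentiableAt ℝ Q₂ y)
    (hM₁ : DifferentiableAt ℝ M₁ y) (hM₂ : DifferentiableAt ℝ M₂ y) :
    deriv (ferroField Q₁ Q₂ M₁ M₂) y =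
      ferroField (deriv Q₁) (deriv Q₂) (deriv M₁) (deriv M₂) y :=
  have hQ := Complex.equivRealProdCLM.symm.hasFDerivAt.comp_hasDerivAt y
    (hQ₁.hasDerivAt.prodMk hQ₂.hasDerivAt)
  have hM := Complex.equivRealProdCLM.symm.hasFDerivAt.comp_hasDerivAt y
    (hM₁.hasDerivAt.prodMk hM₂.hasDerivAt)
  ((WithLp.prodContinuousLinearEquiv 2 ℝ ℂ ℂ).symm.hasFDerivAt.comp_hasDerivAt y
    (hQ.prodMk hM)).deriv

lemma ferroEnergy_eq_elasticEnergy (l c : ℝ) (hQ₁ : DifferentiableOn ℝ Q₁ (Icc (-1) 1))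
    (hQ₂ : DifferentiableOn ℝ Q₂ (Icc (-1) 1)) (hM₁ : DifferentiableOn ℝ M₁ (Icc (-1) 1))
    (hM₂ : DifferentiableOn ℝ M₂ (Icc (-1) 1)) :
    ferroEnergy l c Q₁ Q₂ M₁ M₂ =
      elasticEnergy l (ferroPotential c) (-1) 1 (ferroField Q₁ Q₂ M₁ M₂) := by
  unfold ferroEnergy elasticEnergy
  refine integral_congr_Ioo_of_le (by norm_num) fun y hy => ?_
  have hnhds := Icc_mem_nhds hy.1 hy.2
  have hderiv := deriv_ferroField (hQ₁.differentiableAt hnhds) (hQ₂.differentiableAt hnhds)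
    (hM₁.differentiableAt hnhds) (hM₂.differentiableAt hnhds)
  simp only [derivWithin_of_mem_nhds hnhds, hderiv, norm_ferroField_sq, ferroPotential_ferroField]
  ring

end FerroField

theorem ferro_strict_midpoint_convexity_general (c B : ℝ) :
    ∃ lstar : ℝ, 0 < lstar ∧ ∀ l : ℝ, lstar < l →
      ∀ Q11 Q12 M1 M2 R11 R12 N1 N2 : ℝ → ℝ,
        ContDiffOn ℝ 1 Q11 (Icc (-1) 1) → ContDiffOn ℝ 1 Q12 (Icc (-1) 1) →
        ContDiffOn ℝ 1 M1 (Icc (-1) 1) → ContDiffOn ℝ 1 M2 (Icc (-1) 1) →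
        ContDiffOn ℝ 1 R11 (Icc (-1) 1) → ContDiffOn ℝ 1 R12 (Icc (-1) 1) →
        ContDiffOn ℝ 1 N1 (Icc (-1) 1) → ContDiffOn ℝ 1 N2 (Icc (-1) 1) →
        Q11 (-1) = R11 (-1) → Q12 (-1) = R12 (-1) → M1 (-1) = N1 (-1) → M2 (-1) = N2 (-1) →
        (∀ y ∈ Icc (-1 : ℝ) 1, Q11 y ^ 2 + Q12 y ^ 2 + (M1 y ^ 2 + M2 y ^ 2) ≤ B) →
        (∀ y ∈ Icc (-1 : ℝ) 1, R11 y ^ 2 + R12 y ^ 2 + (N1 y ^ 2 + N2 y ^ 2) ≤ B) →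
        ¬ (∀ y ∈ Icc (-1 : ℝ) 1,
          Q11 y = R11 y ∧ Q12 y = R12 y ∧ M1 y = N1 y ∧ M2 y = N2 y) →
        ∀ s t : ℝ, 0 < s → 0 < t → s + t = 1 →
          ferroEnergy l c (fun y => s * Q11 y + t * R11 y) (fun y => s * Q12 y + t * R12 y)
              (fun y => s * M1 y + t * N1 y) (fun y => s * M2 y + t * N2 y)
            < s * ferroEnergy l c Q11 Q12 M1 M2 + t * ferroEnergy l c R11 R12 N1 N2 := by
  refine ⟨64 * (1 + |c| * √B), by positivity, fun l hl Q11 Q12 M1 M2 R11 R12 N1 N2 hQ11 hQ12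
    hM1 hM2 hR11 hR12 hN1 hN2 hQR11 hQR12 hMN1 hMN2 hQB hRB hne s t hs ht hst => ?_⟩
  have hdiff {f : ℝ → ℝ} (hf : ContDiffOn ℝ 1 f (Icc (-1) 1)) :
      DifferentiableOn ℝ f (Icc (-1) 1) := hf.differentiableOn one_ne_zero
  have hcombo {f g : ℝ → ℝ} (hf : ContDiffOn ℝ 1 f (Icc (-1) 1))
      (hg : ContDiffOn ℝ 1 g (Icc (-1) 1)) :
      DifferentiableOn ℝ (fun y => s * f y + t * g y) (Icc (-1) 1) :=
    ((hdiff hf).const_mul s).add ((hdiff hg).const_mul t)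
  rw [ferroEnergy_eq_elasticEnergy l c (hcombo hQ11 hR11) (hcombo hQ12 hR12) (hcombo hM1 hN1)
      (hcombo hM2 hN2), ← ferroField_combo,
    ferroEnergy_eq_elasticEnergy l c (hdiff hQ11) (hdiff hQ12) (hdiff hM1) (hdiff hM2),
    ferroEnergy_eq_elasticEnergy l c (hdiff hR11) (hdiff hR12) (hdiff hN1) (hdiff hN2)]
  have hball {P₁ P₂ K₁ K₂ : ℝ → ℝ} (hB : ∀ y ∈ Icc (-1 : ℝ) 1,
      P₁ y ^ 2 + P₂ y ^ 2 + (K₁ y ^ 2 + K₂ y ^ 2) ≤ B) :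
      MapsTo (ferroField P₁ P₂ K₁ K₂) (Icc (-1) 1) (closedBall 0 √B) := fun y hy =>
    mem_closedBall_zero_iff.2 (Real.le_sqrt_of_sq_le ((norm_ferroField_sq y).trans_le (hB y hy)))
  have hl₀ : 0 ≤ l := le_trans (by positivity) hl.le
  exact elasticEnergy_combo_lt (by norm_num) hl₀ (by linarith)
    (continuous_ferroPotential c).continuousOn (strongConvexOn_ferroPotential c √B)
    (contDiffOn_ferroField hQ11 hQ12 hM1 hM2) (contDiffOn_ferroField hR11 hR12 hN1 hN2)
    (hball hQB) (hball hRB) (ferroField_eq_iff.2 ⟨hQR11, hQR12, hMN1, hMN2⟩)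
    (fun heq => hne fun y hy => ferroField_eq_iff.1 (heq hy)) hs ht hst

/-- Strict midpoint convexity of the ferronematic energy on the region carved out
by the maximum principle (with `ρ*(c)` the unique positive root of
`x³ − (1 + c²/2)x − c/4`), for sufficiently large elastic constant `l`. -/
theorem ferro_strict_midpoint_convexity (c ρStar : ℝ) (hc : 0 < c)
    (hρpos : 0 < ρStar)
    (hρroot : ρStar ^ 3 - (1 + c ^ 2 / 2) * ρStar - c / 4 = 0) :
    ∃ lstar : ℝ, 0 < lstar ∧ ∀ l : ℝ, lstar < l →
      ∀ Q11 Q12 M1 M2 R11 R12 N1 N2 : ℝ → ℝ,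
        ContDiffOn ℝ 1 Q11 (Icc (-1) 1) → ContDiffOn ℝ 1 Q12 (Icc (-1) 1) →
        ContDiffOn ℝ 1 M1 (Icc (-1) 1) → ContDiffOn ℝ 1 M2 (Icc (-1) 1) →
        ContDiffOn ℝ 1 R11 (Icc (-1) 1) → ContDiffOn ℝ 1 R12 (Icc (-1) 1) →
        ContDiffOn ℝ 1 N1 (Icc (-1) 1) → ContDiffOn ℝ 1 N2 (Icc (-1) 1) →
        Q11 (-1) = 1 → M1 (-1) = 1 → Q11 1 = -1 → M1 1 = -1 →
        Q12 (-1) = 0 → Q12 1 = 0 → M2 (-1) = 0 → M2 1 = 0 →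
        R11 (-1) = 1 → N1 (-1) = 1 → R11 1 = -1 → N1 1 = -1 →
        R12 (-1) = 0 → R12 1 = 0 → N2 (-1) = 0 → N2 1 = 0 →
        (∀ y ∈ Icc (-1 : ℝ) 1,
          (Q11 y) ^ 2 + (Q12 y) ^ 2 ≤ ρStar ^ 2 ∧
          (M1 y) ^ 2 + (M2 y) ^ 2 ≤ 1 + 2 * c * ρStar) →
        (∀ y ∈ Icc (-1 : ℝ) 1,
          (R11 y) ^ 2 + (R12 y) ^ 2 ≤ ρStar ^ 2 ∧
          (N1 y) ^ 2 + (N2 y) ^ 2 ≤ 1 + 2 * c * ρStar) →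
        ¬ (∀ y ∈ Icc (-1 : ℝ) 1,
          Q11 y = R11 y ∧ Q12 y = R12 y ∧ M1 y = N1 y ∧ M2 y = N2 y) →
        ferroEnergy l c (fun y => (Q11 y + R11 y) / 2) (fun y => (Q12 y + R12 y) / 2)
            (fun y => (M1 y + N1 y) / 2) (fun y => (M2 y + N2 y) / 2)
          < (ferroEnergy l c Q11 Q12 M1 M2 + ferroEnergy l c R11 R12 N1 N2) / 2 := by
  obtain ⟨lstar, hpos, hconv⟩ :=
    ferro_strict_midpoint_convexity_general c (ρStar ^ 2 + (1 + 2 * c * ρStar))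
  refine ⟨lstar, hpos, fun l hl Q11 Q12 M1 M2 R11 R12 N1 N2 hQ11 hQ12 hM1 hM2 hR11 hR12 hN1 hN2
    hQ11l hM1l _ _ hQ12l _ hM2l _ hR11l hN1l _ _ hR12l _ hN2l _ hQB hRB hne => ?_⟩
  have h := hconv l hl Q11 Q12 M1 M2 R11 R12 N1 N2 hQ11 hQ12 hM1 hM2 hR11 hR12 hN1 hN2
    (hQ11l.trans hR11l.symm) (hQ12l.trans hR12l.symm) (hM1l.trans hN1l.symm) (hM2l.trans hN2l.symm)
    (fun y hy => add_le_add (hQB y hy).1 (hQB y hy).2)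
    (fun y hy => add_le_add (hRB y hy).1 (hRB y hy).2) hne (1 / 2) (1 / 2)
    (by norm_num) (by norm_num) (by norm_num)
  simpa only [one_div_mul_eq_div, ← add_div] using h
end
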